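/- arXiv:2504.03211 — 4 statements merged into one kernel-verified Lean document; each statement's English description precedes it below -/
import Mathlib

section
/- Fix the event-independent setting with t = 1 and ECE budget ε ≥ 0, and assume U : [0,1] → [0,∞) is upper semicontinuous. Then there exist thresholds 0 ≤ p_L ≤ p_H ≤ 1 and an optimal finitely supported (ε,ℓ_1)-calibrated predictor f* satisfying the miscalibration structure (p ≤ κ(p) for p ∈ supp(f*) ∩ [0,p_L], p = κ(p) for p ∈ supp(f*) ∩ [p_L,p_H], p ≥ κ(p) for p ∈ supp(f*) ∩ [p_H,1]) such that: (i) |supp(f*)| ≤ n + 2; (ii) |supp(f*_i)| ≤ 4 for every event i; and (iii) for every q ∈ [0,1], the set κ^{-1}(q) = {p ∈ supp(f*) : κ(p) = q} has at most 2 elements, and if it has exactly 2 elements then at least one of them lies in [0,p_L] ∪ [p_H,1]. -/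
open Finset

noncomputable section

namespace PersuasiveCalibration

/-- The environment of the persuasive calibration problem: `n` events with
probabilities `lam i > 0` summing to one and sorted expected outcomes `theta i ∈ [0,1]`. -/
structure Setup (n : ℕ) : Type where
  lam : Fin n → ℝ
  theta : Fin n → ℝ
  lam_pos : ∀ i, 0 < lam i
  lam_sum : ∑ i, lam i = 1
  theta_mono : Monotone theta
  theta_mem : ∀ i, theta i ∈ Set.Icc (0 : ℝ) 1

variable {n : ℕ}

/-- A finitely supported probability distribution on `[0,1]`. -/
def IsDist (μ : ℝ →₀ ℝ) : Prop :=
  (∀ p, 0 ≤ μ p) ∧ (∀ p ∈ μ.support, p ∈ Set.Icc (0 : ℝ) 1) ∧ (∑ p ∈ μ.support, μ p) = 1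

/-- A predictor assigns to each event a finitely supported probability distribution on `[0,1]`. -/
def IsPredictor (f : Fin n → ℝ →₀ ℝ) : Prop := ∀ i, IsDist (f i)

/-- The (unconditional) prediction space of a predictor. -/
def suppF (f : Fin n → ℝ →₀ ℝ) : Finset ℝ := Finset.univ.biUnion fun i => (f i).support

/-- The marginalized predictor `f(p) = ∑ i, λ i * f i p`. -/
def marginal (S : Setup n) (f : Fin n → ℝ →₀ ℝ) (p : ℝ) : ℝ := ∑ i, S.lam i * f i p

/-- The true expected outcome conditional on the prediction `p`. -/
def kappa (S : Setup n) (f : Fin n → ℝ →₀ ℝ) (p : ℝ) : ℝ :=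
  (∑ i, S.lam i * f i p * S.theta i) / marginal S f p

/-- The `ℓ_t`-norm expected calibration error of a predictor. -/
def ECE (S : Setup n) (t : ℝ) (f : Fin n → ℝ →₀ ℝ) : ℝ :=
  (∑ p ∈ suppF f, marginal S f p * |kappa S f p - p| ^ t) ^ (1 / t)

/-- The principal's expected payoff from predictor `f` with indirect utilities `U i`. -/
def payoff (S : Setup n) (U : Fin n → ℝ → ℝ) (f : Fin n → ℝ →₀ ℝ) : ℝ :=
  ∑ i, S.lam i * ∑ p ∈ (f i).support, f i p * U i p

/-- The principal's payoff in the event-independent setting. -/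
def payoffEI (S : Setup n) (U : ℝ → ℝ) (f : Fin n → ℝ →₀ ℝ) : ℝ :=
  payoff S (fun _ => U) f

/-- A predictor is perfectly calibrated if `κ(q) = q` on its support. -/
def PerfectlyCalibrated (S : Setup n) (g : Fin n → ℝ →₀ ℝ) : Prop :=
  ∀ q ∈ suppF g, kappa S g q = q

/-- An event-independent post-processing plan: a finitely supported probability
distribution on `[0,1] × [0,1]`; the first coordinate is `q`, the second is `p`. -/
def IsPlan (χ : ℝ × ℝ →₀ ℝ) : Prop :=
  (∀ x, 0 ≤ χ x) ∧ (∀ x ∈ χ.support, x.1 ∈ Set.Icc (0 : ℝ) 1 ∧ x.2 ∈ Set.Icc (0 : ℝ) 1) ∧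
    (∑ x ∈ χ.support, χ x) = 1

/-- The `ℓ_t` calibration cost `∑ χ(q,p) |q - p|^t` of a plan. -/
def planCost (t : ℝ) (χ : ℝ × ℝ →₀ ℝ) : ℝ := ∑ x ∈ χ.support, χ x * |x.1 - x.2| ^ t

/-- The `q`-marginal `∑_p χ(q, p)` of a plan. -/
def planMargQ (χ : ℝ × ℝ →₀ ℝ) (q : ℝ) : ℝ :=
  ∑ x ∈ χ.support.filter fun x => x.1 = q, χ x

/-- Feasibility of a post-processing plan for a perfectly calibrated predictor `g` and
an `ℓ_t` ECE budget `ε`. -/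
def FeasiblePlan (S : Setup n) (t ε : ℝ) (g : Fin n → ℝ →₀ ℝ) (χ : ℝ × ℝ →₀ ℝ) : Prop :=
  planCost t χ ≤ ε ^ t ∧ ∀ q, planMargQ χ q = marginal S g q

/-- The value `f_i(p) = ∑_q (g̃_i(q)/g(q)) χ(q,p)` of the predictor generated by `(g̃, χ)`. -/
def genVal (S : Setup n) (g : Fin n → ℝ →₀ ℝ) (χ : ℝ × ℝ →₀ ℝ) (i : Fin n) (p : ℝ) : ℝ :=
  ∑ q ∈ suppF g, g i q / marginal S g q * χ (q, p)

/-- A predictor generated by some perfectly calibrated predictor and some feasible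
event-independent post-processing plan. -/
def IsGenerated (S : Setup n) (t ε : ℝ) (f : Fin n → ℝ →₀ ℝ) : Prop :=
  ∃ (g : Fin n → ℝ →₀ ℝ) (χ : ℝ × ℝ →₀ ℝ),
    IsPredictor g ∧ PerfectlyCalibrated S g ∧ IsPlan χ ∧ FeasiblePlan S t ε g χ ∧
      ∀ i p, f i p = genVal S g χ i p

/-- The CDF of a finitely supported distribution. -/
def cdf (μ : ℝ →₀ ℝ) (x : ℝ) : ℝ := ∑ q ∈ μ.support.filter fun q => q ≤ x, μ q

/-- The CDF of the distribution placing mass `λ_i` at `θ_i`. -/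
def priorCdf (S : Setup n) (x : ℝ) : ℝ :=
  ∑ i ∈ Finset.univ.filter fun i => S.theta i ≤ x, S.lam i

/-- `μ` is a mean-preserving contraction of the distribution putting mass `λ_i` on `θ_i`. -/
def MPCprior (S : Setup n) (μ : ℝ →₀ ℝ) : Prop :=
  (∀ s ∈ Set.Icc (0 : ℝ) 1,
      (∫ x in (0 : ℝ)..s, cdf μ x) ≤ ∫ x in (0 : ℝ)..s, priorCdf S x) ∧
    (∫ x in (0 : ℝ)..(1 : ℝ), cdf μ x) = ∫ x in (0 : ℝ)..(1 : ℝ), priorCdf S x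

/-- The objective `∑ χ(q,p) U(p)` of the program LP-TwoStep. -/
def LPobj (U : ℝ → ℝ) (χ : ℝ × ℝ →₀ ℝ) : ℝ := ∑ x ∈ χ.support, χ x * U x.2

/-- Feasibility for the program LP-TwoStep. -/
def LPFeasible (S : Setup n) (ε t : ℝ) (χ : ℝ × ℝ →₀ ℝ) (g : ℝ →₀ ℝ) : Prop :=
  (∀ x, 0 ≤ χ x) ∧
  (∀ x ∈ χ.support, x.1 ∈ Set.Icc (0 : ℝ) 1 ∧ x.2 ∈ Set.Icc (0 : ℝ) 1) ∧
  planCost t χ ≤ ε ^ t ∧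
  (∀ q, planMargQ χ q = g q) ∧ IsDist g ∧ MPCprior S g

/-- The optimal value of LP-TwoStep. -/
def OPTLP (S : Setup n) (ε t : ℝ) (U : ℝ → ℝ) : ℝ :=
  sSup {v | ∃ (χ : ℝ × ℝ →₀ ℝ) (g : ℝ →₀ ℝ), LPFeasible S ε t χ g ∧ v = LPobj U χ}

/-- Symmetric linear-tailed convex function with linear tails `[0, xL]`, `[xH, 1]` and
tail slopes `s1`, `s2` of equal absolute value. -/
def SymLinTailedConvex (Γ : ℝ → ℝ) (xL xH s1 s2 : ℝ) : Prop :=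
  ConvexOn ℝ (Set.Icc (0 : ℝ) 1) Γ ∧ 0 ≤ xL ∧ xL ≤ xH ∧ xH ≤ 1 ∧ |s1| = |s2| ∧
    (∃ c1, ∀ x ∈ Set.Icc (0 : ℝ) xL, Γ x = c1 + s1 * x) ∧
    (∃ c2, ∀ x ∈ Set.Icc xH (1 : ℝ), Γ x = c2 + s2 * x)

/-- Tuples `(i, j, q, p)` indexing a bi-event post-processing plan. -/
abbrev BiTuple (n : ℕ) := Fin n × Fin n × ℝ × ℝ

/-- The contribution ratio `r_{i,j}(q)`. -/
def ratio (S : Setup n) (i j : Fin n) (q : ℝ) : ℝ :=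
  if S.theta i < S.theta j then (S.theta j - q) / (S.theta j - S.theta i) else 1

/-- The contribution of the tuple `x = (i', j', q, p)` to event `i`:
`r_{i,j'}(q)` if `i' = i`, and `1 - r_{i',i}(q)` if `j' = i ≠ i'`. -/
def contrib (S : Setup n) (x : BiTuple n) (i : Fin n) : ℝ :=
  (if x.1 = i then ratio S x.1 x.2.1 x.2.2.1 else 0) +
    (if x.2.1 = i ∧ x.1 ≠ i then 1 - ratio S x.1 x.2.1 x.2.2.1 else 0)

/-- A bi-event post-processing plan. -/
def IsBiPlan (S : Setup n) (χ : BiTuple n →₀ ℝ) : Prop :=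
  (∀ x, 0 ≤ χ x) ∧
    ∀ x ∈ χ.support, x.1 ≤ x.2.1 ∧ x.2.2.1 ∈ Set.Icc (0 : ℝ) 1 ∧
      x.2.2.2 ∈ Set.Icc (0 : ℝ) 1 ∧ S.theta x.1 ≤ x.2.2.1 ∧ x.2.2.1 ≤ S.theta x.2.1

/-- Feasibility of a bi-event post-processing plan for `ℓ_t` ECE budget `ε`. -/
def FeasibleBiPlan (S : Setup n) (t ε : ℝ) (χ : BiTuple n →₀ ℝ) : Prop :=
  IsBiPlan S χ ∧
    (∑ x ∈ χ.support, χ x * |x.2.2.1 - x.2.2.2| ^ t) ≤ ε ^ t ∧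
    ∀ i, (∑ x ∈ χ.support, χ x * contrib S x i) = S.lam i

/-- The value `f_i(p)` of the predictor generated by a bi-event post-processing plan. -/
def genValBi (S : Setup n) (χ : BiTuple n →₀ ℝ) (i : Fin n) (p : ℝ) : ℝ :=
  1 / S.lam i * ∑ x ∈ χ.support.filter fun x => x.2.2.2 = p, χ x * contrib S x i

/-- The objective of LP-TwoStep+: `∑ χ_{i,j}(q,p) U_{i,j}(q,p)`. -/
def biObj (S : Setup n) (U : Fin n → ℝ → ℝ) (χ : BiTuple n →₀ ℝ) : ℝ :=
  ∑ x ∈ χ.support, χ x * (ratio S x.1 x.2.1 x.2.2.1 * U x.1 x.2.2.2 +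
    (1 - ratio S x.1 x.2.1 x.2.2.1) * U x.2.1 x.2.2.2)

/-- The optimal value of LP-TwoStep+. -/
def OPTBi (S : Setup n) (U : Fin n → ℝ → ℝ) (t ε : ℝ) : ℝ :=
  sSup {v | ∃ χ : BiTuple n →₀ ℝ, FeasibleBiPlan S t ε χ ∧ v = biObj S U χ}

/-- `U` is piecewise constant with all its discontinuity points in `Z`. -/
def PiecewiseConstWrt (Z : Finset ℝ) (U : ℝ → ℝ) : Prop :=
  ∀ x ∈ Set.Icc (0 : ℝ) 1, ∀ y ∈ Set.Icc (0 : ℝ) 1,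
    (∀ z ∈ Z, z ∉ Set.uIcc x y) → U x = U y

/-- The bound `S = ⌈2 ln(1/δ) / ln(1+δ)⌉` of the second discretization layer. -/
def Sbound (δ : ℝ) : ℕ := ⌈2 * Real.log (1 / δ) / Real.log (1 + δ)⌉₊

/-- The instance-dependent two-layer discretized set `S_δ`. -/
def gridSet (S : Setup n) (Z : Finset ℝ) (ε t δ : ℝ) : Set ℝ :=
  ({x : ℝ | ∃ k : ℕ, x = (k : ℝ) * δ} ∪ {(1 : ℝ)} ∪ Set.range S.theta ∪ (↑Z : Set ℝ) ∪
      {x : ℝ | ∃ z ∈ (↑Z : Set ℝ) ∪ Set.range S.theta, ∃ s : ℕ, s ≤ Sbound δ ∧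
        (x = z + (ε ^ t * δ * (1 + δ) ^ s) ^ (1 / t) ∨
          x = z - (ε ^ t * δ * (1 + δ) ^ s) ^ (1 / t))}) ∩
    Set.Icc (0 : ℝ) 1

/-- Feasibility for the discretized program LP-DiscTwoStep+. -/
def DiscFeasibleBiPlan (S : Setup n) (Z : Finset ℝ) (t ε δ : ℝ) (χ : BiTuple n →₀ ℝ) : Prop :=
  FeasibleBiPlan S t ε χ ∧
    ∀ x ∈ χ.support, x.2.2.1 ∈ gridSet S Z ε t δ ∧ x.2.2.2 ∈ gridSet S Z ε t δ

/-- The optimal value of LP-DiscTwoStep+. -/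
def OPTBiDisc (S : Setup n) (U : Fin n → ℝ → ℝ) (Z : Finset ℝ) (t ε δ : ℝ) : ℝ :=
  sSup {v | ∃ χ : BiTuple n →₀ ℝ, DiscFeasibleBiPlan S Z t ε δ χ ∧ v = biObj S U χ}

/-- A Bayesian persuasion instance with signal-dependent bias: states `θ_i` with
prior `λ`, actions `A`, sender utility `u a i = u(a, θ_i) ≥ 0`, and receiver utility
determined by `v1 a = v(a,1)` and `v0 a = v(a,0)`. -/
structure PSetup (n : ℕ) (A : Type*) : Type _ where
  lam : Fin n → ℝ
  theta : Fin n → ℝ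
  u : A → Fin n → ℝ
  v1 : A → ℝ
  v0 : A → ℝ
  lam_pos : ∀ i, 0 < lam i
  lam_sum : ∑ i, lam i = 1
  theta_mem : ∀ i, theta i ∈ Set.Icc (0 : ℝ) 1
  u_nonneg : ∀ a i, 0 ≤ u a i

variable {A σT : Type*}

/-- The receiver's utility from action `a` at belief mean `x`. -/
def rcvU (P : PSetup n A) (a : A) (x : ℝ) : ℝ := x * P.v1 a + (1 - x) * P.v0 a

/-- The total probability `m(σ)` of a signal `σ`. -/
def mass [Fintype σT] (P : PSetup n A) (π : Fin n → σT → ℝ) (σ : σT) : ℝ :=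
  ∑ i, P.lam i * π i σ

/-- The biased posterior mean `p(σ)` of the receiver upon signal `σ`. -/
def belief [Fintype σT] (P : PSetup n A) (π : Fin n → σT → ℝ) (b : σT → ℝ) (σ : σT) : ℝ :=
  (b σ + ∑ i, P.lam i * π i σ * P.theta i) / mass P π σ

/-- Validity of a sender strategy `(π, b)`. -/
def ValidStrategy [Fintype σT] (P : PSetup n A) (π : Fin n → σT → ℝ) (b : σT → ℝ) : Prop :=
  (∀ i σ, 0 ≤ π i σ) ∧ (∀ i, ∑ σ, π i σ = 1) ∧
    ∀ σ, 0 < mass P π σ → belief P π b σ ∈ Set.Icc (0 : ℝ) 1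

/-- `astar` is a receiver best-response selection for the strategy `(π, b)`. -/
def BestResponse [Fintype σT] (P : PSetup n A) (π : Fin n → σT → ℝ) (b : σT → ℝ)
    (astar : σT → A) : Prop :=
  ∀ σ, 0 < mass P π σ → ∀ a, rcvU P a (belief P π b σ) ≤ rcvU P (astar σ) (belief P π b σ)

/-- The bounded-rationality constraint on the total bias. -/
def BRconstraint [Fintype σT] (P : PSetup n A) (t ε : ℝ) (π : Fin n → σT → ℝ)
    (b : σT → ℝ) : Prop :=
  (∑ σ, mass P π σ * |b σ / mass P π σ| ^ t) ^ (1 / t) ≤ ε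

/-- The sender's expected payoff from strategy `π` with receiver selection `astar`. -/
def senderPayoff [Fintype σT] (P : PSetup n A) (π : Fin n → σT → ℝ) (astar : σT → A) : ℝ :=
  ∑ i, P.lam i * ∑ σ, π i σ * P.u (astar σ) i

/-- Feasibility for the action-recommendation program P-ActRec. -/
def PActRecFeasible [Fintype A] (P : PSetup n A) (t ε : ℝ)
    (π : Fin n → A → ℝ) (b : A → ℝ) : Prop :=
  (∀ i a, 0 ≤ π i a) ∧ (∀ i, ∑ a, π i a = 1) ∧
  (∀ a, mass P π a = 0 → b a = 0) ∧
  (∑ a, mass P π a * |b a / mass P π a| ^ t) ≤ ε ^ t ∧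
  (∀ a, 0 ≤ b a + ∑ i, P.lam i * π i a * P.theta i) ∧
  (∀ a, b a + ∑ i, P.lam i * π i a * P.theta i ≤ mass P π a) ∧
  ∀ a a' : A,
    (b a + ∑ i, P.lam i * π i a * P.theta i) * P.v1 a' +
        (mass P π a - (b a + ∑ i, P.lam i * π i a * P.theta i)) * P.v0 a' ≤
      (b a + ∑ i, P.lam i * π i a * P.theta i) * P.v1 a +
        (mass P π a - (b a + ∑ i, P.lam i * π i a * P.theta i)) * P.v0 a

/-- The sender-side marginal probability of recommendation `a` (calibration model). -/
def pmass [Fintype A] (S : Setup n) (π : Fin n → A → ℝ) (a : A) : ℝ := ∑ i, S.lam i * π i a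

/-- The biased posterior mean associated with recommendation `a` (calibration model). -/
def pbelief [Fintype A] (S : Setup n) (π : Fin n → A → ℝ) (b : A → ℝ) (a : A) : ℝ :=
  (b a + ∑ i, S.lam i * π i a * S.theta i) / pmass S π a

/-!
By Carathéodory's theorem every predictor can be replaced by one that uses `n + 3` columns, each a
prediction of the original one with its posterior, without changing payoff and calibration error.
The optimum is thus taken over a compact set of joint laws of events and columns, where the payoff
is upper semicontinuous. Ties are broken by minimal calibration error, then by maximal sum of
squared column masses, then by a maximal set of nonzero entries.

If an underconfident prediction were at least as large as an overconfident one, mixing the two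
columns would lower the error at equal payoff; this yields a single threshold. Next, add to each
column a multiple of a distribution with the same mean and supported in the column. If the row sums
and the calibration error do not change, both this perturbation and its opposite are feasible, so
strict convexity of the sum of squares forces the multiples to vanish. Hence the vectors
`(distribution, |κ(p) - p|)` of the columns are linearly independent, and it remains to choose the
distributions in a small space. The posteriors themselves give at most `n + 1` columns. By
maximality of the set of nonzero entries, columns with equal mean have the same events and can share
one distribution, which gives `1 + 1`; and the columns containing an event `i` have common events on
either side of `i`, so that three events suffice, which gives `3 + 1`.
-/

section Optimization

/-- The maximizers of `f` on `s`; iterating it gives lexicographic optima. -/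
def argmaxOn {α β : Type*} [Preorder β] (f : α → β) (s : Set α) : Set α :=
  {a ∈ s | IsMaxOn f s a}

section Preorder

variable {α β : Type*} [Preorder β] {f : α → β} {s : Set α} {a b : α}

theorem le_of_mem_argmaxOn (ha : a ∈ argmaxOn f s) (hb : b ∈ s) : f b ≤ f a :=
  isMaxOn_iff.1 ha.2 b hb

theorem mem_argmaxOn_of_le (ha : a ∈ argmaxOn f s) (hb : b ∈ s) (hab : f a ≤ f b) :
    b ∈ argmaxOn f s :=
  ⟨hb, isMaxOn_iff.2 fun _ hc => (le_of_mem_argmaxOn ha hc).trans hab⟩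

end Preorder

variable {α : Type*} [TopologicalSpace α] {f g : α → ℝ} {s : Set α}

theorem argmaxOn_nonempty (hf : UpperSemicontinuousOn f s) (hs : IsCompact s)
    (hne : s.Nonempty) : (argmaxOn f s).Nonempty :=
  hf.exists_isMaxOn hne hs

theorem isCompact_argmaxOn (hf : UpperSemicontinuousOn f s) (hs : IsCompact s) :
    IsCompact (argmaxOn f s) := by
  rcases (argmaxOn f s).eq_empty_or_nonempty with hempty | ⟨a, ha⟩
  · rw [hempty]
    exact isCompact_empty
  · convert hf.isCompact_inter_preimage_Ici hs (f a) using 1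
    ext b
    exact ⟨fun hb => ⟨hb.1, le_of_mem_argmaxOn hb ha.1⟩, fun hb => mem_argmaxOn_of_le ha hb.1 hb.2⟩

theorem exists_lexicographic_max {F : Type*} [Preorder F] [Finite F] {h : α → ℝ} {c : α → F}
    (hs : IsCompact s) (hne : s.Nonempty) (hf : UpperSemicontinuousOn f s) (hg : Continuous g)
    (hh : Continuous h) :
    ∃ a ∈ s, (∀ b ∈ s, f b ≤ f a) ∧ (∀ b ∈ s, f a ≤ f b → g b ≤ g a) ∧
      (∀ b ∈ s, f a ≤ f b → g a ≤ g b → h b ≤ h a) ∧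
      ∀ b ∈ s, f a ≤ f b → g a ≤ g b → h a ≤ h b → c a ≤ c b → c b ≤ c a := by
  have hs₁ := isCompact_argmaxOn hf hs
  have hg₁ := hg.upperSemicontinuous.upperSemicontinuousOn (argmaxOn f s)
  have hs₂ := isCompact_argmaxOn hg₁ hs₁
  have hh₂ := hh.upperSemicontinuous.upperSemicontinuousOn (argmaxOn g (argmaxOn f s))
  obtain ⟨a, ha, hc⟩ := Set.Finite.exists_maximalFor' c (argmaxOn h (argmaxOn g (argmaxOn f s)))
    (Set.toFinite _) <| argmaxOn_nonempty hh₂ hs₂ <| argmaxOn_nonempty hg₁ hs₁ <|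
      argmaxOn_nonempty hf hs hne
  have mem₁ {b} (hb : b ∈ s) (hfb : f a ≤ f b) : b ∈ argmaxOn f s :=
    mem_argmaxOn_of_le ha.1.1 hb hfb
  have mem₂ {b} (hb : b ∈ s) (hfb : f a ≤ f b) (hgb : g a ≤ g b) :
      b ∈ argmaxOn g (argmaxOn f s) :=
    mem_argmaxOn_of_le ha.1 (mem₁ hb hfb) hgb
  exact ⟨a, ha.1.1.1, fun b hb => le_of_mem_argmaxOn ha.1.1 hb,
    fun b hb hfb => le_of_mem_argmaxOn ha.1 (mem₁ hb hfb),
    fun b hb hfb hgb => le_of_mem_argmaxOn ha (mem₂ hb hfb hgb),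
    fun b hb hfb hgb hhb => hc (mem_argmaxOn_of_le ha (mem₂ hb hfb hgb) hhb)⟩

theorem upperSemicontinuousOn_mul_of_nonneg (hg : ContinuousOn g s) (hg0 : ∀ a ∈ s, 0 ≤ g a)
    (hf : UpperSemicontinuousOn f s) : UpperSemicontinuousOn (fun a => g a * f a) s := by
  intro a ha c hc
  obtain ⟨u, hu, hfu⟩ : ∃ u, g a * u < c ∧ f a < u :=
    ((((continuous_const_mul (g a)).tendsto (f a)).eventually_lt_const hc).filter_mono
      nhdsWithin_le_nhds |>.and (self_mem_nhdsWithin (s := Set.Ioi (f a)))).exists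
  filter_upwards [((hg a ha).mul_const u).eventually_lt_const hu, hf a ha u hfu,
    self_mem_nhdsWithin] with b hgb hfb hb
  exact (mul_le_mul_of_nonneg_left hfb.le (hg0 b hb)).trans_lt hgb

end Optimization

section FiniteSums

theorem exists_column_combination {α V γ : Type*} [AddCommGroup V] [Module ℝ V]
    [FiniteDimensional ℝ V] [Fintype γ] (hγ : Module.finrank ℝ V < Fintype.card γ)
    {T : Finset α} {w : α → ℝ} (hw0 : ∀ a ∈ T, 0 ≤ w a) (hw1 : ∑ a ∈ T, w a = 1) (v : α → V) :
    ∃ (a : γ → α) (c : γ → ℝ), (∀ k, a k ∈ T) ∧ (∀ k, 0 ≤ c k) ∧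
      ∑ k, c k • v (a k) = ∑ a ∈ T, w a • v a := by
  obtain ⟨ι, _, z, c, hz, hind, hc0, -, hsum⟩ := eq_pos_convex_span_of_mem_convexHull
    ((convex_convexHull ℝ (v '' T)).sum_mem hw0 hw1 fun a ha =>
      subset_convexHull ℝ _ (Set.mem_image_of_mem v ha))
  obtain ⟨e⟩ : Nonempty (ι ↪ γ) := Function.Embedding.nonempty_of_card_le <|
    hind.card_le_finrank_succ.trans <|
      (Nat.succ_le_succ (Submodule.finrank_le _)).trans hγ
  choose b hbT hbz using fun k => hz (Set.mem_range_self k)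
  obtain ⟨a₀, ha₀⟩ : T.Nonempty := by
    by_contra hT
    simp [Finset.not_nonempty_iff_eq_empty.1 hT] at hw1
  refine ⟨Function.extend e b fun _ => a₀, Function.extend e c 0, fun k => ?_, fun k => ?_, ?_⟩
  · by_cases hk : ∃ l, e l = k
    · obtain ⟨l, rfl⟩ := hk
      simpa only [e.injective.extend_apply, Finset.mem_coe] using hbT l
    · simpa only [Function.extend_apply' _ _ _ hk] using ha₀
  · by_cases hk : ∃ l, e l = k
    · obtain ⟨l, rfl⟩ := hk
      simpa only [e.injective.extend_apply] using (hc0 l).le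
    · simp only [Function.extend_apply' _ _ _ hk, Pi.zero_apply, le_refl]
  · rw [← hsum]
    refine (Fintype.sum_of_injective e e.injective _ _ (fun k hk => ?_) fun l => ?_).symm
    · simp only [Function.extend_apply' _ _ _ hk, Pi.zero_apply, zero_smul]
    · simp only [e.injective.extend_apply, hbz]

theorem card_le_of_forall_relation_eq_zero {γ D : Type*} [Fintype γ] [Fintype D] {T : Finset γ}
    (v : γ → D → ℝ)
    (hv : ∀ c : γ → ℝ, (∀ k ∉ T, c k = 0) → (∀ d, ∑ k, c k * v k d = 0) → c = 0) :
    T.card ≤ Fintype.card D := by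
  classical
  have hind : LinearIndepOn ℝ v T := linearIndepOn_finset_iff.2 fun c hc k hk => by
    have hzero : (fun k => if k ∈ T then c k else 0) = 0 := by
      refine hv _ (fun k hk => if_neg hk) fun d => ?_
      simpa [ite_mul, Finset.sum_ite_mem] using congrFun hc d
    simpa [hk] using congrFun hzero k
  simpa using hind.fintype_card_le_finrank

theorem sum_sub_sum_eq_of_eq_off_pair {γ : Type*} [Fintype γ] {k l : γ} (hkl : k ≠ l)
    {F G : γ → ℝ} (h : ∀ j, j ≠ k → j ≠ l → F j = G j) :
    ∑ j, F j - ∑ j, G j = (F k - G k) + (F l - G l) := by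
  rw [← Finset.sum_sub_distrib]
  exact Fintype.sum_eq_add k l hkl fun j hj => sub_eq_zero.2 (h j hj.1 hj.2)

end FiniteSums

section Moves

open Filter Topology

variable {ι γ : Type*}

theorem eventually_pos_add_mul {a : ℝ} (ha : 0 < a) (b : ℝ) : ∀ᶠ t in 𝓝 (0 : ℝ), 0 < a + t * b :=
  (by fun_prop : Continuous fun t : ℝ => a + t * b).tendsto 0 |>.eventually_const_lt
    (by simpa using ha)

section Nonneg

variable [Finite ι] [Finite γ] {x y : ι → γ → ℝ}

theorem eventually_nonneg_add_smul (hx : ∀ i k, 0 ≤ x i k) (hy : ∀ i k, x i k = 0 → y i k = 0) :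
    ∀ᶠ t in 𝓝 (0 : ℝ), ∀ i k, 0 ≤ (x + t • y) i k := by
  simp only [eventually_all]
  intro i k
  by_cases hxik : x i k = 0
  · simp [hxik, hy]
  · exact (eventually_pos_add_mul ((hx i k).lt_of_ne' hxik) (y i k)).mono fun _ => le_of_lt

theorem eventually_nonneg_add_smul_right (hx : ∀ i k, 0 ≤ x i k)
    (hy : ∀ i k, x i k = 0 → 0 ≤ y i k) :
    ∀ᶠ t in 𝓝[>] (0 : ℝ), ∀ i k, 0 ≤ (x + t • y) i k ∧ (x i k ≠ 0 → (x + t • y) i k ≠ 0) := by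
  simp only [eventually_all]
  intro i k
  by_cases hxik : x i k = 0
  · filter_upwards [self_mem_nhdsWithin] with t ht
    exact ⟨by simpa [hxik] using mul_nonneg (le_of_lt ht) (hy i k hxik), fun h => (h hxik).elim⟩
  · filter_upwards [(eventually_pos_add_mul ((hx i k).lt_of_ne' hxik) (y i k)).filter_mono
      nhdsWithin_le_nhds] with t ht
    exact ⟨ht.le, fun _ => ht.ne'⟩

end Nonneg

variable [DecidableEq γ] {x : ι → γ → ℝ} {k l : γ} (w : ι → ℝ)

/-- The direction that moves the masses `w` from column `k` to column `l`. -/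
def transfer (w : ι → ℝ) (k l : γ) (i : ι) (j : γ) : ℝ :=
  w i * ((Pi.single l 1 : γ → ℝ) j - (Pi.single k 1 : γ → ℝ) j)

theorem sum_transfer [Fintype γ] (k l : γ) (i : ι) : ∑ j, transfer w k l i j = 0 := by
  simp [transfer, ← Finset.mul_sum]

theorem transfer_apply_left (hkl : k ≠ l) (i : ι) : transfer w k l i k = -w i := by
  simp [transfer, hkl]

theorem transfer_apply_right (hkl : k ≠ l) (i : ι) : transfer w k l i l = w i := by
  simp [transfer, hkl.symm]

theorem transfer_apply_of_ne {j : γ} (hjk : j ≠ k) (hjl : j ≠ l) (i : ι) :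
    transfer w k l i j = 0 := by
  simp [transfer, hjk, hjl]

theorem transfer_nonneg_of_eq_zero (hkl : k ≠ l)
    (hk : ∀ i, x i k = 0 → w i ≤ 0) (hl : ∀ i, x i l = 0 → 0 ≤ w i) (i : ι) (j : γ)
    (hij : x i j = 0) : 0 ≤ transfer w k l i j := by
  obtain rfl | hjk := eq_or_ne j k
  · simpa [transfer_apply_left w hkl] using hk i hij
  obtain rfl | hjl := eq_or_ne j l
  · simpa [transfer_apply_right w hkl] using hl i hij
  · exact (transfer_apply_of_ne w hjk hjl i).ge

/-- The columns of `x`, with the content of column `l` moved into column `k`. -/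
def merge (x : ι → γ → ℝ) (k l : γ) (i : ι) : γ → ℝ :=
  Function.update (Function.update (x i) k (x i k + x i l)) l 0

theorem merge_apply_left (hkl : k ≠ l) (i : ι) : merge x k l i k = x i k + x i l := by
  simp [merge, hkl]

theorem merge_apply_right (i : ι) : merge x k l i l = 0 := by
  simp [merge]

theorem merge_apply_of_ne {j : γ} (hjk : j ≠ k) (hjl : j ≠ l) (i : ι) :
    merge x k l i j = x i j := by
  simp [merge, hjk, hjl]

end Moves

section Columns

variable {ι γ : Type*} [Fintype ι]

/-- The total mass of column `k`. Throughout, `x i k` is the joint probability of event `i` and of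
column `k`, and `p k` is the prediction issued in column `k`. -/
def colMass (x : ι → γ → ℝ) (k : γ) : ℝ := ∑ i, x i k

/-- The expected outcome conditional on column `k`, which is the junk value `0` for an empty
column. -/
def colMean (θ : ι → ℝ) (x : ι → γ → ℝ) (k : γ) : ℝ := (∑ i, x i k * θ i) / colMass x k

/-- The conditional distribution of the event given column `k`, which is `0` for an empty
column. -/
def posterior (x : ι → γ → ℝ) (k : γ) (i : ι) : ℝ := x i k / colMass x k

/-- The signed miscalibration of column `k`, weighted by the mass of the column. -/
def colBias (θ : ι → ℝ) (p : γ → ℝ) (x : ι → γ → ℝ) (k : γ) : ℝ := ∑ i, x i k * (θ i - p k)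

section Nonneg

variable {θ : ι → ℝ} {p : γ → ℝ} {x : ι → γ → ℝ} {k : γ}

theorem colMass_nonneg (hx : ∀ i, 0 ≤ x i k) : 0 ≤ colMass x k :=
  Finset.sum_nonneg fun i _ => hx i

theorem eq_zero_of_colMass_eq_zero (hx : ∀ i, 0 ≤ x i k) (hk : colMass x k = 0) (i : ι) :
    x i k = 0 :=
  (Finset.sum_eq_zero_iff_of_nonneg fun i _ => hx i).1 hk i (Finset.mem_univ i)

theorem colMass_pos_of_ne_zero (hx : ∀ i, 0 ≤ x i k) {i : ι} (hi : x i k ≠ 0) : 0 < colMass x k :=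
  (colMass_nonneg hx).lt_of_ne' fun hk => hi (eq_zero_of_colMass_eq_zero hx hk i)

theorem colMass_mul_colMean (hx : ∀ i, 0 ≤ x i k) :
    colMass x k * colMean θ x k = ∑ i, x i k * θ i := by
  by_cases hk : colMass x k = 0
  · simp [hk, eq_zero_of_colMass_eq_zero hx hk]
  · exact mul_div_cancel₀ _ hk

theorem colBias_eq_colMass_mul (hx : ∀ i, 0 ≤ x i k) :
    colBias θ p x k = colMass x k * (colMean θ x k - p k) := by
  rw [mul_sub, colMass_mul_colMean hx]
  simp only [colBias, colMass, mul_sub, Finset.sum_sub_distrib, Finset.sum_mul]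

theorem abs_colBias (hx : ∀ i, 0 ≤ x i k) :
    |colBias θ p x k| = colMass x k * |colMean θ x k - p k| := by
  rw [colBias_eq_colMass_mul hx, abs_mul, abs_of_nonneg (colMass_nonneg hx)]

theorem colMean_mem_Icc (hx : ∀ i, 0 ≤ x i k) (hk : 0 < colMass x k) {a b : ℝ}
    (hθ : ∀ i, θ i ∈ Set.Icc a b) : colMean θ x k ∈ Set.Icc a b := by
  rw [Set.mem_Icc, colMean, le_div_iff₀ hk, div_le_iff₀ hk, colMass, Finset.mul_sum,
    Finset.mul_sum]
  exact ⟨Finset.sum_le_sum fun i _ => by nlinarith [hx i, (hθ i).1],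
    Finset.sum_le_sum fun i _ => by nlinarith [hx i, (hθ i).2]⟩

theorem exists_ne_zero_lt_of_colMean_lt (hx : ∀ i, 0 ≤ x i k) (hk : 0 < colMass x k) {a : ℝ}
    (ha : colMean θ x k < a) : ∃ j, x j k ≠ 0 ∧ θ j < a := by
  rw [colMean, div_lt_iff₀ hk, colMass, Finset.mul_sum] at ha
  obtain ⟨j, -, hj⟩ := Finset.exists_lt_of_sum_lt ha
  rw [mul_comm a] at hj
  exact ⟨j, fun h0 => by simp [h0] at hj, lt_of_mul_lt_mul_left hj (hx j)⟩

theorem posterior_nonneg (hx : ∀ i, 0 ≤ x i k) (i : ι) : 0 ≤ posterior x k i :=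
  div_nonneg (hx i) (colMass_nonneg hx)

theorem posterior_eq_zero_iff (hk : 0 < colMass x k) {i : ι} :
    posterior x k i = 0 ↔ x i k = 0 := by
  simp [posterior, hk.ne']

theorem sum_posterior (hk : 0 < colMass x k) : ∑ i, posterior x k i = 1 := by
  simp only [posterior, ← Finset.sum_div]
  exact div_self hk.ne'

end Nonneg

theorem sum_posterior_mul (θ : ι → ℝ) (x : ι → γ → ℝ) (k : γ) :
    ∑ i, posterior x k i * θ i = colMean θ x k := by
  simp only [posterior, colMean, Finset.sum_div, div_mul_eq_mul_div]

theorem colMean_neg (θ : ι → ℝ) (x : ι → γ → ℝ) (k : γ) : colMean (-θ) x k = -colMean θ x k := by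
  simp [colMean, neg_div]

section Linearity

variable (x y : ι → γ → ℝ) (t : ℝ) (k : γ)

theorem colMass_add_smul : colMass (x + t • y) k = colMass x k + t * colMass y k := by
  simp [colMass, Finset.sum_add_distrib, Finset.mul_sum]

theorem colBias_add_smul (θ : ι → ℝ) (p : γ → ℝ) :
    colBias θ p (x + t • y) k = colBias θ p x k + t * colBias θ p y k := by
  simp only [colBias, Pi.add_apply, Pi.smul_apply, smul_eq_mul, Finset.mul_sum, add_mul,
    Finset.sum_add_distrib, mul_assoc]

end Linearity

section Transfer

variable [DecidableEq γ] (w : ι → ℝ) (k l j : γ)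

theorem colMass_transfer :
    colMass (transfer w k l) j =
      (∑ i, w i) * ((Pi.single l 1 : γ → ℝ) j - (Pi.single k 1 : γ → ℝ) j) := by
  simp only [colMass, transfer, Finset.sum_mul]

theorem colBias_transfer (θ : ι → ℝ) (p : γ → ℝ) :
    colBias θ p (transfer w k l) j =
      (∑ i, w i * (θ i - p j)) * ((Pi.single l 1 : γ → ℝ) j - (Pi.single k 1 : γ → ℝ) j) := by
  simp only [colBias, transfer, Finset.sum_mul, mul_right_comm]

end Transfer

theorem colMass_merge_left [DecidableEq γ] {x : ι → γ → ℝ} {k l : γ} (hkl : k ≠ l) :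
    colMass (merge x k l) k = colMass x k + colMass x l := by
  simp [colMass, merge_apply_left hkl, Finset.sum_add_distrib]

/-- `r` is a (signed) distribution of the event with the same mean as column `k` and supported in
it. Adding a multiple of `r` to the column thus changes its mass but not its mean. -/
structure MatchesColumn (θ : ι → ℝ) (x : ι → γ → ℝ) (k : γ) (r : ι → ℝ) : Prop where
  sum_eq_one : ∑ i, r i = 1
  sum_mul_eq : ∑ i, r i * θ i = colMean θ x k
  eq_zero : ∀ i, x i k = 0 → r i = 0

theorem matchesColumn_posterior {θ : ι → ℝ} {x : ι → γ → ℝ} {k : γ} (hk : 0 < colMass x k) :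
    MatchesColumn θ x k (posterior x k) where
  sum_eq_one := sum_posterior hk
  sum_mul_eq := sum_posterior_mul θ x k
  eq_zero _ hi := (posterior_eq_zero_iff hk).2 hi

end Columns

section Exchange

variable {ι γ : Type*} [Fintype ι] {θ : ι → ℝ} {x : ι → γ → ℝ}

/-- Every exchange `w` of mass between two columns that preserves their masses and means is
confined to events occurring in both columns. -/
def IsExchangeStable (θ : ι → ℝ) (x : ι → γ → ℝ) : Prop :=
  ∀ (k l : γ) (w : ι → ℝ), ∑ i, w i = 0 → ∑ i, w i * θ i = 0 → (∀ i, x i k = 0 → w i ≤ 0) →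
    (∀ i, x i l = 0 → 0 ≤ w i) → ∀ i, x i k = 0 ∨ x i l = 0 → w i = 0

theorem IsExchangeStable.neg (h : IsExchangeStable θ x) : IsExchangeStable (-θ) x :=
  fun k l w hw hwθ => h k l w hw (by simpa using hwθ)

theorem IsExchangeStable.ne_zero_of_colMean_eq (h : IsExchangeStable θ x)
    (hx : ∀ i k, 0 ≤ x i k) {k l : γ} (hk : 0 < colMass x k) (hl : 0 < colMass x l)
    (hmean : colMean θ x k = colMean θ x l) {i : ι} (hi : x i k ≠ 0) : x i l ≠ 0 := by
  intro hil
  have hdiff : posterior x k i - posterior x l i = 0 := by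
    refine h k l (fun i => posterior x k i - posterior x l i) ?_ ?_ (fun i hi => ?_)
      (fun i hi => ?_) i (Or.inr hil)
    · rw [Finset.sum_sub_distrib, sum_posterior hk, sum_posterior hl, sub_self]
    · simp only [sub_mul, Finset.sum_sub_distrib, sum_posterior_mul, hmean, sub_self]
    · simpa [(posterior_eq_zero_iff hk).2 hi] using posterior_nonneg (fun i => hx i l) i
    · simpa [(posterior_eq_zero_iff hl).2 hi] using posterior_nonneg (fun i => hx i k) i
  rw [(posterior_eq_zero_iff hl).2 hil, sub_zero] at hdiff
  exact hi ((posterior_eq_zero_iff hk).1 hdiff)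

theorem IsExchangeStable.ne_zero_of_le_of_lt (h : IsExchangeStable θ x) {i j m : ι} {k l : γ}
    (hi : x i k ≠ 0) (hj : x j k ≠ 0) (hm : x m l ≠ 0) (hjm : θ j ≤ θ m) (hmi : θ m < θ i) :
    x j l ≠ 0 := by
  classical
  intro hjl
  -- Event `m` of column `l` is swapped for the mixture of `i` and `j` with the same outcome.
  obtain ⟨b, hb, hb1, hbθ⟩ : ∃ b : ℝ, 0 < b ∧ b ≤ 1 ∧ b * θ j + (1 - b) * θ i = θ m := by
    have hji : 0 < θ i - θ j := by linarith
    exact ⟨(θ i - θ m) / (θ i - θ j), div_pos (by linarith) hji,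
      (div_le_one hji).2 (by linarith), by field_simp; ring⟩
  let w : ι → ℝ := b • Pi.single j 1 + (1 - b) • Pi.single i 1 - Pi.single m 1
  have hw : ∑ a, w a = 0 := by
    simp [w, Finset.sum_add_distrib, ← Finset.mul_sum]
  have hwθ : ∑ a, w a * θ a = 0 := by
    rw [← sub_eq_zero] at hbθ
    simpa [w, sub_mul, add_mul, Finset.sum_add_distrib, Pi.single_apply] using hbθ
  have hk : ∀ a, x a k = 0 → w a ≤ 0 := fun a ha => by
    have haj : a ≠ j := by rintro rfl; exact hj ha
    have hai : a ≠ i := by rintro rfl; exact hi ha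
    simpa [w, haj, hai] using (Pi.single_nonneg (α := fun _ : ι => ℝ)).2 zero_le_one a
  have hl : ∀ a, x a l = 0 → 0 ≤ w a := fun a ha => by
    have ham : a ≠ m := by rintro rfl; exact hm ha
    have hsingle (c : ι) : 0 ≤ (Pi.single c 1 : ι → ℝ) a :=
      (Pi.single_nonneg (α := fun _ : ι => ℝ)).2 zero_le_one a
    simpa [w, ham] using
      add_nonneg (mul_nonneg hb.le (hsingle j)) (mul_nonneg (sub_nonneg.2 hb1) (hsingle i))
  have hji : j ≠ i := by rintro rfl; linarith
  have hjm' : j ≠ m := by rintro rfl; exact hm hjl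
  have hzero : w j = 0 := h k l w hw hwθ hk hl j (Or.inr hjl)
  simp [w, hji, hjm', hb.ne'] at hzero

theorem IsExchangeStable.exists_common_event (h : IsExchangeStable θ x) (hx : ∀ i k, 0 ≤ x i k)
    (i : ι) : ∃ j, ∀ k, x i k ≠ 0 → colMean θ x k < θ i → x j k ≠ 0 ∧ θ j < θ i := by
  classical
  let J : Set ι := {j | ∃ k, x i k ≠ 0 ∧ colMean θ x k < θ i ∧ x j k ≠ 0}
  rcases J.eq_empty_or_nonempty with hJ | hJ
  · exact ⟨i, fun k hik hk => (Set.eq_empty_iff_forall_notMem.1 hJ i ⟨k, hik, hk, hik⟩).elim⟩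
  obtain ⟨j, ⟨k₀, hik₀, -, hjk₀⟩, hmin⟩ := J.exists_min_image θ J.toFinite hJ
  refine ⟨j, fun k hik hk => ?_⟩
  obtain ⟨m, hmk, hmi⟩ := exists_ne_zero_lt_of_colMean_lt (fun i => hx i k)
    (colMass_pos_of_ne_zero (fun i => hx i k) hik) hk
  have hjm : θ j ≤ θ m := hmin m ⟨k, hik, hk, hmk⟩
  exact ⟨h.ne_zero_of_le_of_lt hik₀ hjk₀ hmk hjm hmi, hjm.trans_lt hmi⟩

theorem IsExchangeStable.exists_mul_sub_eq_min (h : IsExchangeStable θ x)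
    (hx : ∀ i k, 0 ≤ x i k) (i : ι) :
    ∃ (j : ι) (u : γ → ℝ), ∀ k, x i k ≠ 0 →
      u k * (θ j - θ i) = min (colMean θ x k - θ i) 0 ∧ (x j k = 0 → u k = 0) := by
  obtain ⟨j, hj⟩ := h.exists_common_event hx i
  refine ⟨j, fun k => min (colMean θ x k - θ i) 0 / (θ j - θ i), fun k hik => ?_⟩
  rcases lt_or_ge (colMean θ x k) (θ i) with hk | hk
  · obtain ⟨hjk, hji⟩ := hj k hik hk
    exact ⟨div_mul_cancel₀ _ (sub_neg.2 hji).ne, fun hjk0 => (hjk hjk0).elim⟩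
  · simp [min_eq_right (sub_nonneg.2 hk)]

theorem IsExchangeStable.exists_mul_sub_eq_max (h : IsExchangeStable θ x)
    (hx : ∀ i k, 0 ≤ x i k) (i : ι) :
    ∃ (j : ι) (u : γ → ℝ), ∀ k, x i k ≠ 0 →
      u k * (θ j - θ i) = max (colMean θ x k - θ i) 0 ∧ (x j k = 0 → u k = 0) := by
  obtain ⟨j, u, hu⟩ := h.neg.exists_mul_sub_eq_min hx i
  refine ⟨j, u, fun k hik => ⟨?_, (hu k hik).2⟩⟩
  have hmin := (hu k hik).1
  simp only [colMean_neg, Pi.neg_apply, neg_sub_neg] at hmin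
  rw [← neg_inj, ← min_neg_neg, neg_zero, neg_sub, ← hmin]
  ring

theorem IsExchangeStable.exists_matchesColumn (h : IsExchangeStable θ x)
    (hx : ∀ i k, 0 ≤ x i k) (i : ι) :
    ∃ (d : Fin 3 → ι → ℝ) (u : γ → Fin 3 → ℝ),
      ∀ k, x i k ≠ 0 → MatchesColumn θ x k (fun a => ∑ s, u k s * d s a) := by
  classical
  obtain ⟨j, u, hu⟩ := h.exists_mul_sub_eq_min hx i
  obtain ⟨m, v, hv⟩ := h.exists_mul_sub_eq_max hx i
  let e : ι → ι → ℝ := fun a => Pi.single a 1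
  refine ⟨![e i, e j - e i, e m - e i], fun k => ![1, u k, v k], fun k hik => ⟨?_, ?_, ?_⟩⟩
  · simp [Fin.sum_univ_three, e, Finset.sum_add_distrib, ← Finset.mul_sum]
  · have hmean : colMean θ x k = θ i + u k * (θ j - θ i) + v k * (θ m - θ i) := by
      linarith [min_add_max (colMean θ x k - θ i) 0, (hu k hik).1, (hv k hik).1]
    simp [hmean, Fin.sum_univ_three, e, Finset.sum_add_distrib, add_mul, sub_mul, mul_assoc,
      ← Finset.mul_sum, Pi.single_apply]
  · intro a hak
    have hai : a ≠ i := by rintro rfl; exact hik hak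
    have huj : u k * e j a = 0 := by
      obtain rfl | haj := eq_or_ne a j
      · simp [(hu k hik).2 hak]
      · simp [e, haj]
    have hvm : v k * e m a = 0 := by
      obtain rfl | ham := eq_or_ne a m
      · simp [(hv k hik).2 hak]
      · simp [e, ham]
    have hei : e i a = 0 := by simp [e, hai]
    simp [Fin.sum_univ_three, hei, huj, hvm]

end Exchange

section Program

variable {ι γ : Type*} [Fintype ι] [Fintype γ]

/-- The `ℓ₁` calibration error of the program. -/
def totalBias (θ : ι → ℝ) (p : γ → ℝ) (x : ι → γ → ℝ) : ℝ := ∑ k, |colBias θ p x k|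

/-- The principal's payoff. -/
def value (U : ℝ → ℝ) (p : γ → ℝ) (x : ι → γ → ℝ) : ℝ := ∑ k, colMass x k * U (p k)

/-- A strictly convex function of the column masses, whose maximization breaks ties in favour of
few columns. -/
def concentration (x : ι → γ → ℝ) : ℝ := ∑ k, colMass x k ^ 2

/-- The pairs of an event and a column with positive joint probability. -/
def cells (x : ι → γ → ℝ) : Finset (ι × γ) := {a | x a.1 a.2 ≠ 0}

/-- The columns that are issued with positive probability. -/
def activeColumns (x : ι → γ → ℝ) : Finset γ := {k | 0 < colMass x k}

theorem mem_activeColumns {x : ι → γ → ℝ} {k : γ} : k ∈ activeColumns x ↔ 0 < colMass x k := by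
  simp [activeColumns]

theorem mem_cells {x : ι → γ → ℝ} {a : ι × γ} : a ∈ cells x ↔ x a.1 a.2 ≠ 0 := by
  simp [cells]

theorem value_add_smul (U : ℝ → ℝ) (p : γ → ℝ) (x y : ι → γ → ℝ) (t : ℝ) :
    value U p (x + t • y) = value U p x + t * value U p y := by
  simp only [value, colMass_add_smul, Finset.mul_sum, add_mul, Finset.sum_add_distrib, mul_assoc]

/-- The feasible points of the program that maximizes `value` over predictors with prior `lam`,
one column per prediction, and calibration error at most `ε`. Distinct columns may carry equal
predictions. -/
structure IsFeasible (lam θ : ι → ℝ) (ε : ℝ) (p : γ → ℝ) (x : ι → γ → ℝ) : Prop where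
  mem_Icc : ∀ k, p k ∈ Set.Icc (0 : ℝ) 1
  nonneg : ∀ i k, 0 ≤ x i k
  row_sum : ∀ i, ∑ k, x i k = lam i
  totalBias_le : totalBias θ p x ≤ ε

/-- A feasible point of maximal value that among those has minimal calibration error, then maximal
concentration, and then an inclusion-maximal set of cells. -/
structure IsLexOptimal (lam θ : ι → ℝ) (ε : ℝ) (U : ℝ → ℝ) (p : γ → ℝ) (x : ι → γ → ℝ) : Prop
    extends IsFeasible lam θ ε p x where
  value_le : ∀ (p' : γ → ℝ) x', IsFeasible lam θ ε p' x' → value U p' x' ≤ value U p x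
  totalBias_min : ∀ (p' : γ → ℝ) x', IsFeasible lam θ ε p' x' → value U p x ≤ value U p' x' →
    totalBias θ p x ≤ totalBias θ p' x'
  concentration_le : ∀ (p' : γ → ℝ) x', IsFeasible lam θ ε p' x' → value U p x ≤ value U p' x' →
    totalBias θ p' x' ≤ totalBias θ p x → concentration x' ≤ concentration x
  cells_subset : ∀ (p' : γ → ℝ) x', IsFeasible lam θ ε p' x' → value U p x ≤ value U p' x' →
    totalBias θ p' x' ≤ totalBias θ p x → concentration x ≤ concentration x' →
    cells x ⊆ cells x' → cells x' ⊆ cells x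

theorem isClosed_setOf_isFeasible (lam θ : ι → ℝ) (ε : ℝ) :
    IsClosed {z : (γ → ℝ) × (ι → γ → ℝ) | IsFeasible lam θ ε z.1 z.2} := by
  have hset : {z : (γ → ℝ) × (ι → γ → ℝ) | IsFeasible lam θ ε z.1 z.2} =
      (⋂ k, {z | z.1 k ∈ Set.Icc 0 1}) ∩ (⋂ i, ⋂ k, {z | 0 ≤ z.2 i k}) ∩
        (⋂ i, {z | ∑ k, z.2 i k = lam i}) ∩ {z | totalBias θ z.1 z.2 ≤ ε} := by
    ext z
    simp only [Set.mem_inter_iff, Set.mem_iInter]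
    exact ⟨fun h => ⟨⟨⟨h.mem_Icc, h.nonneg⟩, h.row_sum⟩, h.totalBias_le⟩,
      fun h => ⟨h.1.1.1, h.1.1.2, h.1.2, h.2⟩⟩
  rw [hset]
  unfold totalBias colBias
  refine (((isClosed_iInter fun k => isClosed_Icc.preimage (by fun_prop)).inter
    (isClosed_iInter fun i => isClosed_iInter fun k => ?_)).inter
    (isClosed_iInter fun i => ?_)).inter ?_
  · exact isClosed_le (by fun_prop) (by fun_prop)
  · exact isClosed_eq (by fun_prop) (by fun_prop)
  · exact isClosed_le (by fun_prop) (by fun_prop)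

theorem isCompact_setOf_isFeasible (lam θ : ι → ℝ) (ε : ℝ) :
    IsCompact {z : (γ → ℝ) × (ι → γ → ℝ) | IsFeasible lam θ ε z.1 z.2} := by
  refine (isCompact_Icc (a := (0 : (γ → ℝ) × (ι → γ → ℝ)))
    (b := (1, fun i _ => lam i))).of_isClosed_subset (isClosed_setOf_isFeasible lam θ ε)
      fun z hz => ⟨⟨fun k => (hz.mem_Icc k).1, hz.nonneg⟩, fun k => (hz.mem_Icc k).2,
        fun i k => ?_⟩
  change z.2 i k ≤ lam i
  rw [← hz.row_sum i]
  exact Finset.single_le_sum (f := z.2 i) (fun l _ => hz.nonneg i l) (Finset.mem_univ k)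

theorem upperSemicontinuousOn_value {U : ℝ → ℝ}
    (hU : UpperSemicontinuousOn U (Set.Icc (0 : ℝ) 1)) (lam θ : ι → ℝ) (ε : ℝ) :
    UpperSemicontinuousOn (fun z : (γ → ℝ) × (ι → γ → ℝ) => value U z.1 z.2)
      {z | IsFeasible lam θ ε z.1 z.2} :=
  upperSemicontinuousOn_sum fun k _ => upperSemicontinuousOn_mul_of_nonneg
    (by unfold colMass; fun_prop) (fun _ hz => colMass_nonneg fun i => hz.nonneg i k)
    (hU.comp (g := fun z : (γ → ℝ) × (ι → γ → ℝ) => z.1 k) (by fun_prop)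
      fun _ hz => hz.mem_Icc k)

theorem exists_isFeasible [Nonempty γ] {lam θ : ι → ℝ} {ε : ℝ} (hlam : ∀ i, 0 ≤ lam i)
    (hsum : ∑ i, lam i = 1) (hθ : ∀ i, θ i ∈ Set.Icc (0 : ℝ) 1) (hε : 0 ≤ ε) :
    ∃ (p : γ → ℝ) (x : ι → γ → ℝ), IsFeasible lam θ ε p x := by
  classical
  obtain ⟨k₀⟩ := ‹Nonempty γ›
  let p : γ → ℝ := fun _ => ∑ i, lam i * θ i
  let x : ι → γ → ℝ := fun i => Pi.single k₀ (lam i)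
  have hbias (k : γ) : colBias θ p x k = 0 := by
    obtain rfl | hk := eq_or_ne k k₀
    · simp [colBias, p, x, mul_sub, Finset.sum_sub_distrib, ← Finset.sum_mul, hsum]
    · simp [colBias, x, hk]
  refine ⟨p, x, fun _ => ?_, fun i k => ?_, fun i => by simp [x], by simpa [totalBias, hbias]⟩
  · exact (convex_Icc (0 : ℝ) 1).sum_mem (fun i _ => hlam i) hsum fun i _ => hθ i
  · exact (Pi.single_nonneg (α := fun _ : γ => ℝ)).2 (hlam i) k

theorem exists_isLexOptimal [Nonempty γ] {lam θ : ι → ℝ} {ε : ℝ} {U : ℝ → ℝ}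
    (hlam : ∀ i, 0 ≤ lam i) (hsum : ∑ i, lam i = 1) (hθ : ∀ i, θ i ∈ Set.Icc (0 : ℝ) 1)
    (hε : 0 ≤ ε) (hU : UpperSemicontinuousOn U (Set.Icc (0 : ℝ) 1)) :
    ∃ (p : γ → ℝ) (x : ι → γ → ℝ), IsLexOptimal lam θ ε U p x := by
  obtain ⟨p₀, x₀, h₀⟩ := exists_isFeasible (γ := γ) hlam hsum hθ hε
  obtain ⟨⟨p, x⟩, hfeas, hvalue, hbias, hconc, hcells⟩ := exists_lexicographic_max
    (g := fun z : (γ → ℝ) × (ι → γ → ℝ) => -totalBias θ z.1 z.2)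
    (h := fun z => concentration z.2) (c := fun z => cells z.2)
    (isCompact_setOf_isFeasible lam θ ε) ⟨(p₀, x₀), h₀⟩ (upperSemicontinuousOn_value hU lam θ ε)
    (by unfold totalBias colBias; fun_prop) (by unfold concentration colMass; fun_prop)
  exact ⟨p, x, hfeas, fun p' x' h => hvalue (p', x') h,
    fun p' x' h hv => neg_le_neg_iff.1 (hbias (p', x') h hv),
    fun p' x' h hv hb => hconc (p', x') h hv (neg_le_neg hb),
    fun p' x' h hv hb => hcells (p', x') h hv (neg_le_neg hb)⟩

end Program

section Perturbation

open Filter Topology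

variable {ι γ : Type*} [Fintype ι] [Fintype γ]

variable {lam θ : ι → ℝ} {ε : ℝ} {U : ℝ → ℝ} {p : γ → ℝ} {x y : ι → γ → ℝ}

theorem IsFeasible.add_smul (h : IsFeasible lam θ ε p x) (hrow : ∀ i, ∑ k, y i k = 0) {t : ℝ}
    (hnonneg : ∀ i k, 0 ≤ (x + t • y) i k) (hbias : totalBias θ p (x + t • y) ≤ totalBias θ p x) :
    IsFeasible lam θ ε p (x + t • y) where
  mem_Icc := h.mem_Icc
  nonneg := hnonneg
  row_sum i := by simp [Finset.sum_add_distrib, ← Finset.mul_sum, hrow, h.row_sum]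
  totalBias_le := hbias.trans h.totalBias_le

theorem concentration_add_add_concentration_sub (x y : ι → γ → ℝ) (t : ℝ) :
    concentration (x + t • y) + concentration (x + (-t) • y) =
      2 * concentration x + 2 * t ^ 2 * concentration y := by
  simp only [concentration, colMass_add_smul, Finset.mul_sum, ← Finset.sum_add_distrib]
  exact Finset.sum_congr rfl fun k _ => by ring

theorem colMass_eq_zero_of_concentration_nonpos (hy : concentration y ≤ 0) (k : γ) :
    colMass y k = 0 := by
  have hsq : ∀ j ∈ Finset.univ, 0 ≤ colMass y j ^ 2 := fun j _ => sq_nonneg _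
  exact pow_eq_zero_iff two_ne_zero |>.1 <|
    (Finset.sum_eq_zero_iff_of_nonneg hsq).1 (hy.antisymm (Finset.sum_nonneg hsq)) k
      (Finset.mem_univ k)

/-- By optimality `value` is constant along such a direction, and the strictly convex
`concentration` has no interior maximum. -/
theorem IsLexOptimal.colMass_eq_zero (h : IsLexOptimal lam θ ε U p x)
    (hrow : ∀ i, ∑ k, y i k = 0) (hy : ∀ i k, x i k = 0 → y i k = 0)
    (hbias : ∀ t : ℝ, (∀ i k, 0 ≤ (x + t • y) i k) → totalBias θ p (x + t • y) ≤ totalBias θ p x)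
    (k : γ) : colMass y k = 0 := by
  have hev := eventually_nonneg_add_smul h.nonneg hy
  obtain ⟨t, ⟨hadd, hsub⟩, ht⟩ : ∃ t : ℝ, ((∀ i k, 0 ≤ (x + t • y) i k) ∧
      ∀ i k, 0 ≤ (x + (-t) • y) i k) ∧ 0 < t :=
    (((hev.and ((continuous_neg.tendsto' (0 : ℝ) 0 neg_zero).eventually hev)).filter_mono
      nhdsWithin_le_nhds).and (self_mem_nhdsWithin (s := Set.Ioi 0))).exists
  have hfadd := h.toIsFeasible.add_smul hrow hadd (hbias t hadd)
  have hfsub := h.toIsFeasible.add_smul hrow hsub (hbias (-t) hsub)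
  have hvadd := h.value_le _ _ hfadd
  have hvsub := h.value_le _ _ hfsub
  rw [value_add_smul] at hvadd hvsub
  have hcadd := h.concentration_le _ _ hfadd (by rw [value_add_smul]; linarith) (hbias t hadd)
  have hcsub := h.concentration_le _ _ hfsub (by rw [value_add_smul]; linarith) (hbias (-t) hsub)
  refine colMass_eq_zero_of_concentration_nonpos ?_ k
  have hconv := concentration_add_add_concentration_sub x y t
  exact nonpos_of_mul_nonpos_right (a := 2 * t ^ 2) (by linarith) (by positivity)

theorem IsLexOptimal.eq_zero_of_matchesColumn (h : IsLexOptimal lam θ ε U p x) {c : γ → ℝ}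
    {r : γ → ι → ℝ} (hr : ∀ k, c k ≠ 0 → MatchesColumn θ x k (r k))
    (hrow : ∀ i, ∑ k, c k * r k i = 0) (hbias : ∑ k, c k * |colMean θ x k - p k| = 0) :
    c = 0 := by
  let y : ι → γ → ℝ := fun i k => c k * r k i
  have hmass (k : γ) : colMass y k = c k := by
    by_cases hk : c k = 0
    · simp [y, colMass, hk]
    · simp [y, colMass, ← Finset.mul_sum, (hr k hk).sum_eq_one]
  have hcolBias (k : γ) : colBias θ p y k = c k * (colMean θ x k - p k) := by
    by_cases hk : c k = 0
    · simp [y, colBias, hk]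
    · simp [y, colBias, mul_assoc, mul_sub, ← Finset.mul_sum, ← Finset.sum_mul,
        (hr k hk).sum_mul_eq, (hr k hk).sum_eq_one, Finset.sum_sub_distrib]
  funext k
  rw [← hmass k]
  refine h.colMass_eq_zero (y := y) hrow (fun i k hik => ?_) (fun t ht => le_of_eq ?_) k
  · by_cases hk : c k = 0
    · simp [y, hk]
    · simp [y, (hr k hk).eq_zero i hik]
  · have habs (k : γ) : |colBias θ p (x + t • y) k| =
        |colBias θ p x k| + t * (c k * |colMean θ x k - p k|) := by
      have hpos : 0 ≤ colMass x k + t * c k := by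
        rw [← hmass k, ← colMass_add_smul]
        exact colMass_nonneg fun i => ht i k
      rw [colBias_add_smul, hcolBias, colBias_eq_colMass_mul fun i => h.nonneg i k, ← mul_assoc,
        ← add_mul, abs_mul, abs_mul, abs_of_nonneg hpos,
        abs_of_nonneg (colMass_nonneg fun i => h.nonneg i k)]
      ring
    simp only [totalBias, habs, Finset.sum_add_distrib, ← Finset.mul_sum, hbias, mul_zero,
      add_zero]

theorem IsLexOptimal.isExchangeStable (h : IsLexOptimal lam θ ε U p x) :
    IsExchangeStable θ x := by
  classical
  intro k l w hw hwθ hk hl i hi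
  obtain rfl | hkl := eq_or_ne k l
  · exact (hk i (or_self_iff.1 hi)).antisymm (hl i (or_self_iff.1 hi))
  obtain ⟨t, ht, htpos⟩ := ((eventually_nonneg_add_smul_right h.nonneg
    (transfer_nonneg_of_eq_zero w hkl hk hl)).and (self_mem_nhdsWithin (s := Set.Ioi 0))).exists
  have hmass (j : γ) : colMass (x + t • transfer w k l) j = colMass x j := by
    simp [colMass_add_smul, colMass_transfer, hw]
  have hbias : totalBias θ p (x + t • transfer w k l) = totalBias θ p x := by
    simp [totalBias, colBias_add_smul, colBias_transfer, mul_sub, ← Finset.sum_mul, hw, hwθ]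
  have hsub : cells (x + t • transfer w k l) ⊆ cells x :=
    h.cells_subset p _
      (h.toIsFeasible.add_smul (sum_transfer w k l) (fun i j => (ht i j).1) hbias.le)
      (by simp [value, hmass]) hbias.le (by simp [concentration, hmass])
      fun a ha => mem_cells.2 ((ht a.1 a.2).2 (mem_cells.1 ha))
  have hzero {j : γ} (hij : x i j = 0) : transfer w k l i j = 0 := by
    by_contra hne
    refine mem_cells.1 (hsub (mem_cells (a := (i, j)).2 ?_)) hij
    simpa [hij] using ⟨(ne_of_gt htpos : t ≠ 0), hne⟩
  exact hi.elim (fun hik => by simpa [transfer_apply_left w hkl] using hzero hik)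
    fun hil => by simpa [transfer_apply_right w hkl] using hzero hil

section Merge

variable [DecidableEq γ] {k l : γ}

theorem concentration_merge (hkl : k ≠ l) :
    concentration (merge x k l) = concentration x + 2 * (colMass x k * colMass x l) := by
  have hdiff := sum_sub_sum_eq_of_eq_off_pair hkl (F := fun j => colMass (merge x k l) j ^ 2)
    (G := fun j => colMass x j ^ 2) fun j hjk hjl => by simp [colMass, merge_apply_of_ne hjk hjl]
  have hright : colMass (merge x k l) l = 0 := by simp [colMass, merge_apply_right]
  simp only [colMass_merge_left hkl, hright] at hdiff
  simp only [concentration]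
  linarith

theorem value_merge (U : ℝ → ℝ) (hkl : k ≠ l) (hp : p k = p l) :
    value U p (merge x k l) = value U p x := by
  have hdiff := sum_sub_sum_eq_of_eq_off_pair hkl
    (F := fun j => colMass (merge x k l) j * U (p j)) (G := fun j => colMass x j * U (p j))
    fun j hjk hjl => by simp [colMass, merge_apply_of_ne hjk hjl]
  have hright : colMass (merge x k l) l = 0 := by simp [colMass, merge_apply_right]
  simp only [colMass_merge_left hkl, hright, hp] at hdiff
  simp only [value]
  linarith

theorem totalBias_merge_le (θ : ι → ℝ) (hkl : k ≠ l) (hp : p k = p l) :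
    totalBias θ p (merge x k l) ≤ totalBias θ p x := by
  have hdiff := sum_sub_sum_eq_of_eq_off_pair hkl (F := fun j => |colBias θ p (merge x k l) j|)
    (G := fun j => |colBias θ p x j|) fun j hjk hjl => by
      simp [colBias, merge_apply_of_ne hjk hjl]
  have hleft : colBias θ p (merge x k l) k = colBias θ p x k + colBias θ p x l := by
    simp [colBias, merge_apply_left hkl, hp, add_mul, Finset.sum_add_distrib]
  have hright : colBias θ p (merge x k l) l = 0 := by simp [colBias, merge_apply_right]
  simp only [hleft, hright, abs_zero] at hdiff
  simp only [totalBias]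
  linarith [abs_add_le (colBias θ p x k) (colBias θ p x l)]

theorem IsFeasible.merge (h : IsFeasible lam θ ε p x) (hkl : k ≠ l) (hp : p k = p l) :
    IsFeasible lam θ ε p (merge x k l) where
  mem_Icc := h.mem_Icc
  nonneg i j := by
    obtain rfl | hjl := eq_or_ne j l
    · exact (merge_apply_right i).ge
    obtain rfl | hjk := eq_or_ne j k
    · exact merge_apply_left hkl i ▸ add_nonneg (h.nonneg i j) (h.nonneg i l)
    · exact merge_apply_of_ne hjk hjl i ▸ h.nonneg i j
  row_sum i := by
    have hdiff := sum_sub_sum_eq_of_eq_off_pair hkl (F := PersuasiveCalibration.merge x k l i)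
      (G := x i) fun j hjk hjl => merge_apply_of_ne hjk hjl i
    rw [merge_apply_left hkl, merge_apply_right] at hdiff
    linarith [h.row_sum i]
  totalBias_le := (totalBias_merge_le θ hkl hp).trans h.totalBias_le

end Merge

theorem IsLexOptimal.injOn_activeColumns (h : IsLexOptimal lam θ ε U p x) :
    Set.InjOn p (activeColumns x) := by
  classical
  intro k hk l hl hp
  by_contra hkl
  have hconc := h.concentration_le p _ (h.toIsFeasible.merge hkl hp) (value_merge U hkl hp).ge
    (totalBias_merge_le θ hkl hp)
  rw [concentration_merge hkl] at hconc
  linarith [mul_pos (mem_activeColumns.1 hk) (mem_activeColumns.1 hl)]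

theorem totalBias_add_smul_transfer_lt [DecidableEq γ] {k l : γ} (hkl : k ≠ l) {w : ι → ℝ}
    (hw : ∑ i, w i = 0) {t : ℝ} (hpos : 0 < t * ∑ i, w i * θ i)
    (hk : t * ∑ i, w i * θ i ≤ colBias θ p x k) (hl : t * ∑ i, w i * θ i ≤ -colBias θ p x l) :
    totalBias θ p (x + t • transfer w k l) < totalBias θ p x := by
  have hsum (j : γ) : ∑ i, w i * (θ i - p j) = ∑ i, w i * θ i := by
    simp [mul_sub, Finset.sum_sub_distrib, ← Finset.sum_mul, hw]
  have hdiff := sum_sub_sum_eq_of_eq_off_pair hkl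
    (F := fun j => |colBias θ p (x + t • transfer w k l) j|) (G := fun j => |colBias θ p x j|)
    fun j hjk hjl => by simp [colBias_add_smul, colBias_transfer, hjk, hjl]
  have hleft : colBias θ p (x + t • transfer w k l) k =
      colBias θ p x k - t * ∑ i, w i * θ i := by
    rw [colBias_add_smul, colBias_transfer, hsum]
    simp [hkl, ← sub_eq_add_neg]
  have hright : colBias θ p (x + t • transfer w k l) l =
      colBias θ p x l + t * ∑ i, w i * θ i := by
    simp [colBias_add_smul, colBias_transfer, hsum, hkl.symm]
  rw [hleft, hright, abs_of_nonneg (sub_nonneg.2 hk), abs_of_nonneg (hpos.le.trans hk),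
    abs_of_nonpos (a := colBias θ p x l + _) (by linarith), abs_of_nonpos (by linarith)] at hdiff
  simp only [totalBias]
  linarith

theorem IsLexOptimal.lt_of_lt_colMean_of_colMean_lt (h : IsLexOptimal lam θ ε U p x)
    {k l : γ} (hk : k ∈ activeColumns x) (hl : l ∈ activeColumns x)
    (hpk : p k < colMean θ x k) (hpl : colMean θ x l < p l) : p k < p l := by
  classical
  rw [mem_activeColumns] at hk hl
  by_contra! hlk
  have hkl : k ≠ l := by rintro rfl; linarith
  let w : ι → ℝ := fun i => posterior x k i - posterior x l i
  have hw : ∑ i, w i = 0 := by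
    simp only [w, Finset.sum_sub_distrib, sum_posterior hk, sum_posterior hl, sub_self]
  have hwθ : 0 < ∑ i, w i * θ i := by
    simp only [w, sub_mul, Finset.sum_sub_distrib, sum_posterior_mul]
    linarith
  have hbias_k : 0 < colBias θ p x k := by
    rw [colBias_eq_colMass_mul fun i => h.nonneg i k]
    exact mul_pos hk (sub_pos.2 hpk)
  have hbias_l : 0 < -colBias θ p x l := by
    rw [colBias_eq_colMass_mul fun i => h.nonneg i l, ← mul_neg, neg_sub]
    exact mul_pos hl (sub_pos.2 hpl)
  have hnonneg := eventually_nonneg_add_smul_right h.nonneg <|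
    transfer_nonneg_of_eq_zero (k := k) (l := l) w hkl
      (fun i hi => by simpa [w, (posterior_eq_zero_iff hk).2 hi] using
        posterior_nonneg (fun i => h.nonneg i l) i)
      fun i hi => by simpa [w, (posterior_eq_zero_iff hl).2 hi] using
        posterior_nonneg (fun i => h.nonneg i k) i
  have hsmall := ((eventually_pos_add_mul hbias_k (-∑ i, w i * θ i)).and
    (eventually_pos_add_mul hbias_l (-∑ i, w i * θ i))).filter_mono
      (nhdsWithin_le_nhds (s := Set.Ioi 0))
  obtain ⟨t, ⟨ht, ht_k, ht_l⟩, htpos⟩ :=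
    ((hnonneg.and hsmall).and (self_mem_nhdsWithin (s := Set.Ioi 0))).exists
  have hlt := totalBias_add_smul_transfer_lt hkl hw (mul_pos htpos hwθ) (p := p) (x := x)
    (by linarith) (by linarith)
  refine hlt.not_ge (h.totalBias_min p _
    (h.toIsFeasible.add_smul (sum_transfer w k l) (fun i j => (ht i j).1) hlt.le) ?_)
  simp [value, colMass_add_smul, colMass_transfer, hw]

theorem IsLexOptimal.exists_threshold (h : IsLexOptimal lam θ ε U p x)
    (hθ : ∀ i, θ i ∈ Set.Icc (0 : ℝ) 1) :
    ∃ c ∈ Set.Icc (0 : ℝ) 1, ∀ k ∈ activeColumns x,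
      (p k ≤ c → p k ≤ colMean θ x k) ∧ (c ≤ p k → colMean θ x k ≤ p k) := by
  classical
  obtain ⟨c, hlow, hhigh⟩ := Order.exists_between_finsets
    (({k ∈ activeColumns x | p k < colMean θ x k} : Finset γ).image p)
    (({k ∈ activeColumns x | colMean θ x k < p k} : Finset γ).image p) (by
      simp only [Finset.forall_mem_image, Finset.mem_filter]
      exact fun k hk l hl => h.lt_of_lt_colMean_of_colMean_lt hk.1 hl.1 hk.2 hl.2)
  simp only [Finset.forall_mem_image, Finset.mem_filter] at hlow hhigh
  refine ⟨max 0 (min c 1), ⟨le_max_left _ _, max_le zero_le_one (min_le_right _ _)⟩,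
    fun k hk => ?_⟩
  have hmean := colMean_mem_Icc (fun i => h.nonneg i k) (mem_activeColumns.1 hk) hθ
  constructor <;> intro hpc <;> by_contra! hlt
  · have hpos : 0 < p k := hmean.1.trans_lt hlt
    have hmin : p k ≤ min c 1 := (le_max_iff.1 hpc).resolve_left hpos.not_ge
    exact (hhigh ⟨hk, hlt⟩).not_ge (hmin.trans (min_le_left _ _))
  · have hlt_one : p k < 1 := hlt.trans_le hmean.2
    have hmin : min c 1 ≤ p k := (le_max_right _ _).trans hpc
    exact (hlow ⟨hk, hlt⟩).not_ge ((min_le_iff.1 hmin).resolve_right hlt_one.not_ge)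

end Perturbation

section Counting

variable {ι γ : Type*} [Fintype ι] [Fintype γ]

variable {lam θ : ι → ℝ} {ε : ℝ} {U : ℝ → ℝ} {p : γ → ℝ} {x : ι → γ → ℝ}

/-- A linear relation between the coefficients of the columns in the fixed family `d` and their
calibration errors is a perturbation, so there is none. -/
theorem IsLexOptimal.card_le_of_matchesColumn_sum (h : IsLexOptimal lam θ ε U p x)
    {σ : Type*} [Fintype σ] {T : Finset γ} (d : σ → ι → ℝ) (u : γ → σ → ℝ)
    (hd : ∀ k ∈ T, MatchesColumn θ x k (fun i => ∑ s, u k s * d s i)) :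
    T.card ≤ Fintype.card σ + 1 := by
  rw [← Fintype.card_option]
  refine card_le_of_forall_relation_eq_zero
    (fun k s => s.elim |colMean θ x k - p k| (u k)) fun c hc hrel => ?_
  refine h.eq_zero_of_matchesColumn (fun k hk => hd k (not_imp_comm.1 (hc k) hk)) (fun i => ?_)
    (hrel none)
  have hs (s : σ) : ∑ k, c k * u k s = 0 := hrel (some s)
  simp only [Finset.mul_sum, ← mul_assoc]
  rw [Finset.sum_comm]
  simp only [← Finset.sum_mul, hs, zero_mul, Finset.sum_const_zero]

theorem IsLexOptimal.card_activeColumns_le (h : IsLexOptimal lam θ ε U p x) :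
    (activeColumns x).card ≤ Fintype.card ι + 1 := by
  classical
  refine h.card_le_of_matchesColumn_sum (fun i => Pi.single i 1) (posterior x) fun k hk => ?_
  simpa [Pi.single_apply] using matchesColumn_posterior (θ := θ) (mem_activeColumns.1 hk)

theorem IsLexOptimal.card_row_le (h : IsLexOptimal lam θ ε U p x) (i : ι) :
    ({k | x i k ≠ 0} : Finset γ).card ≤ 4 := by
  obtain ⟨d, u, hd⟩ := h.isExchangeStable.exists_matchesColumn h.nonneg i
  exact h.card_le_of_matchesColumn_sum d u fun k hk => hd k (Finset.mem_filter.1 hk).2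

theorem IsLexOptimal.card_colMean_fiber_le (h : IsLexOptimal lam θ ε U p x) (q : ℝ) :
    ({k ∈ activeColumns x | colMean θ x k = q} : Finset γ).card ≤ 2 := by
  rcases ({k ∈ activeColumns x | colMean θ x k = q} : Finset γ).eq_empty_or_nonempty with
    hempty | ⟨k₀, hk₀⟩
  · simp [hempty]
  simp only [Finset.mem_filter, mem_activeColumns] at hk₀
  refine h.card_le_of_matchesColumn_sum (σ := Unit) (fun _ => posterior x k₀) (fun _ _ => 1)
    fun k hk => ?_
  simp only [Finset.mem_filter, mem_activeColumns] at hk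
  have hmean : colMean θ x k = colMean θ x k₀ := hk.2.trans hk₀.2.symm
  have hmatch := matchesColumn_posterior (θ := θ) hk₀.1
  simp only [Finset.univ_unique, Finset.sum_singleton, one_mul]
  refine ⟨hmatch.sum_eq_one, hmatch.sum_mul_eq.trans hmean.symm, fun i hi => ?_⟩
  refine hmatch.eq_zero i (not_imp_not.1 (fun hik₀ => ?_) hi)
  exact h.isExchangeStable.ne_zero_of_colMean_eq h.nonneg hk₀.1 hk.1 hmean.symm hik₀

end Counting

section Predictors

/-- The joint law of the event and the prediction; its columns are indexed by the predictions, so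
that `marginal` and `kappa` are its column masses and column means. -/
def jointLaw (S : Setup n) (f : Fin n → ℝ →₀ ℝ) (i : Fin n) (q : ℝ) : ℝ := S.lam i * f i q

theorem marginal_eq_colMass (S : Setup n) (f : Fin n → ℝ →₀ ℝ) (q : ℝ) :
    marginal S f q = colMass (jointLaw S f) q :=
  rfl

theorem kappa_eq_colMean (S : Setup n) (f : Fin n → ℝ →₀ ℝ) (q : ℝ) :
    kappa S f q = colMean S.theta (jointLaw S f) q :=
  rfl

theorem mem_suppF {f : Fin n → ℝ →₀ ℝ} {q : ℝ} : q ∈ suppF f ↔ ∃ i, f i q ≠ 0 := by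
  simp [suppF]

theorem ECE_one (S : Setup n) (f : Fin n → ℝ →₀ ℝ) :
    ECE S 1 f = ∑ q ∈ suppF f, marginal S f q * |kappa S f q - q| := by
  simp [ECE]

theorem sum_support_eq_sum_suppF (f : Fin n → ℝ →₀ ℝ) (i : Fin n) (g : ℝ → ℝ) :
    ∑ q ∈ (f i).support, f i q * g q = ∑ q ∈ suppF f, f i q * g q :=
  Finset.sum_subset (Finset.subset_biUnion_of_mem (fun i => (f i).support) (Finset.mem_univ i))
    fun q _ hq => by rw [Finsupp.notMem_support_iff.1 hq, zero_mul]

theorem payoffEI_eq_sum_suppF (S : Setup n) (U : ℝ → ℝ) (f : Fin n → ℝ →₀ ℝ) :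
    payoffEI S U f = ∑ q ∈ suppF f, marginal S f q * U q := by
  simp only [payoffEI, payoff, sum_support_eq_sum_suppF, marginal, Finset.mul_sum,
    Finset.sum_mul, mul_assoc]
  exact Finset.sum_comm

section IsPredictor

variable {S : Setup n} {f : Fin n → ℝ →₀ ℝ}

theorem jointLaw_nonneg (hf : IsPredictor f) (i : Fin n) (q : ℝ) : 0 ≤ jointLaw S f i q :=
  mul_nonneg (S.lam_pos i).le ((hf i).1 q)

theorem marginal_pos (hf : IsPredictor f) {q : ℝ} (hq : q ∈ suppF f) : 0 < marginal S f q := by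
  obtain ⟨i, hi⟩ := mem_suppF.1 hq
  exact colMass_pos_of_ne_zero (fun i => jointLaw_nonneg hf i q)
    (mul_ne_zero (S.lam_pos i).ne' hi)

theorem mem_Icc_of_mem_suppF (hf : IsPredictor f) {q : ℝ} (hq : q ∈ suppF f) :
    q ∈ Set.Icc (0 : ℝ) 1 := by
  obtain ⟨i, hi⟩ := mem_suppF.1 hq
  exact (hf i).2.1 q (Finsupp.mem_support_iff.2 hi)

theorem sum_jointLaw (hf : IsPredictor f) (i : Fin n) :
    ∑ q ∈ suppF f, jointLaw S f i q = S.lam i := by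
  have hsum : ∑ q ∈ suppF f, f i q = 1 := by
    simpa [(hf i).2.2] using (sum_support_eq_sum_suppF f i fun _ => 1).symm
  simp only [jointLaw, ← Finset.mul_sum, hsum, mul_one]

theorem sum_marginal (hf : IsPredictor f) : ∑ q ∈ suppF f, marginal S f q = 1 := by
  simp only [marginal_eq_colMass, colMass]
  rw [Finset.sum_comm]
  simp only [sum_jointLaw hf, S.lam_sum]

theorem exists_isFeasible_value_eq_payoffEI {γ : Type*} [Fintype γ] (hγ : n + 2 < Fintype.card γ)
    {ε : ℝ} (U : ℝ → ℝ) (hf : IsPredictor f) (hE : ECE S 1 f ≤ ε) :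
    ∃ (p : γ → ℝ) (x : Fin n → γ → ℝ),
      IsFeasible S.lam S.theta ε p x ∧ value U p x = payoffEI S U f := by
  let v (q : ℝ) : (Fin n → ℝ) × ℝ × ℝ := (posterior (jointLaw S f) q, |kappa S f q - q|, U q)
  obtain ⟨p, c, hp, hc, hsum⟩ := exists_column_combination (by simpa using hγ)
    (fun q hq => (marginal_pos (S := S) hf hq).le) (sum_marginal hf) v
  simp only [Prod.ext_iff, funext_iff, Prod.fst_sum, Prod.snd_sum, Finset.sum_apply, v,
    Prod.smul_fst, Prod.smul_snd, Pi.smul_apply, smul_eq_mul] at hsum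
  obtain ⟨hposterior, herror, hpayoff⟩ := hsum
  let x : Fin n → γ → ℝ := fun i k => c k * posterior (jointLaw S f) (p k) i
  have hpos (k : γ) : 0 < colMass (jointLaw S f) (p k) := marginal_pos hf (hp k)
  have hmass (k : γ) : colMass x k = c k := by
    simp only [colMass, x, ← Finset.mul_sum, sum_posterior (hpos k), mul_one]
  have hbias (k : γ) : |colBias S.theta p x k| = c k * |kappa S f (p k) - p k| := by
    rw [kappa_eq_colMean, ← sum_posterior_mul, ← abs_of_nonneg (hc k), ← abs_mul]
    simp only [colBias, x, mul_assoc, mul_sub, Finset.sum_sub_distrib, ← Finset.mul_sum,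
      ← Finset.sum_mul, sum_posterior (hpos k), one_mul]
  refine ⟨p, x, ⟨fun k => mem_Icc_of_mem_suppF hf (hp k), fun i k => ?_, fun i => ?_, ?_⟩, ?_⟩
  · exact mul_nonneg (hc k) (posterior_nonneg (fun i => jointLaw_nonneg hf i _) i)
  · rw [hposterior i, ← sum_jointLaw (S := S) hf i]
    exact Finset.sum_congr rfl fun q hq => mul_div_cancel₀ _ (marginal_pos hf hq).ne'
  · rwa [totalBias, Finset.sum_congr rfl fun k _ => hbias k, herror, ← ECE_one]
  · simp only [value, hmass, hpayoff, payoffEI_eq_sum_suppF]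

end IsPredictor

section PredictorOf

variable {γ : Type*} [Fintype γ] {S : Setup n} {p : γ → ℝ} {x : Fin n → γ → ℝ}

/-- The predictor whose joint law with the event is `x`, where column `k` predicts `p k`. -/
def predictorOf (S : Setup n) (p : γ → ℝ) (x : Fin n → γ → ℝ) (i : Fin n) : ℝ →₀ ℝ :=
  Finsupp.mapDomain p (Finsupp.equivFunOnFinite.symm fun k => x i k / S.lam i)

theorem support_predictorOf_subset (i : Fin n) :
    (predictorOf S p x i).support ⊆ ({k | x i k ≠ 0} : Finset γ).image p := by
  classical
  refine Finsupp.mapDomain_support.trans (Finset.image_subset_image fun k hk => ?_)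
  simpa [(S.lam_pos i).ne'] using hk

theorem isPredictor_predictorOf {ε : ℝ} (h : IsFeasible S.lam S.theta ε p x) :
    IsPredictor (predictorOf S p x) := by
  refine fun i => ⟨?_, fun q hq => ?_, ?_⟩
  · exact Finsupp.mapDomain_nonneg fun k => div_nonneg (h.nonneg i k) (S.lam_pos i).le
  · obtain ⟨k, -, rfl⟩ := Finset.mem_image.1 (support_predictorOf_subset i hq)
    exact h.mem_Icc k
  · change (predictorOf S p x i).sum (fun _ m => m) = 1
    rw [predictorOf, Finsupp.sum_mapDomain_index (fun _ => rfl) (fun _ _ _ => rfl),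
      Finsupp.equivFunOnFinite_symm_sum, ← Finset.sum_div, h.row_sum, div_self (S.lam_pos i).ne']

theorem payoffEI_predictorOf (S : Setup n) (U : ℝ → ℝ) (p : γ → ℝ) (x : Fin n → γ → ℝ) :
    payoffEI S U (predictorOf S p x) = value U p x := by
  have hrow (i : Fin n) : S.lam i * ∑ q ∈ (predictorOf S p x i).support,
      predictorOf S p x i q * U q = ∑ k, x i k * U (p k) := by
    change S.lam i * (predictorOf S p x i).sum (fun q m => m * U q) = _
    rw [predictorOf, Finsupp.sum_mapDomain_index (by simp) (by simp [add_mul]),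
      Finsupp.sum_fintype _ _ (by simp), Finset.mul_sum]
    refine Finset.sum_congr rfl fun k _ => ?_
    rw [Finsupp.equivFunOnFinite_symm_apply_apply, ← mul_assoc,
      mul_div_cancel₀ _ (S.lam_pos i).ne']
  simp only [payoffEI, payoff, hrow, value, colMass, Finset.sum_mul]
  exact Finset.sum_comm

theorem jointLaw_predictorOf (hx : ∀ i k, 0 ≤ x i k) (hp : Set.InjOn p (activeColumns x)) {k : γ}
    (hk : k ∈ activeColumns x) (i : Fin n) : jointLaw S (predictorOf S p x) i (p k) = x i k := by
  rw [jointLaw, predictorOf, Finsupp.mapDomain_apply' (activeColumns x) _ (fun l hl => ?_) hp hk,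
    Finsupp.equivFunOnFinite_symm_apply_apply, mul_div_cancel₀ _ (S.lam_pos i).ne']
  exact mem_activeColumns.2
    (colMass_pos_of_ne_zero (i := i) (fun i => hx i l) fun h0 => by simp [h0] at hl)

theorem marginal_predictorOf (hx : ∀ i k, 0 ≤ x i k) (hp : Set.InjOn p (activeColumns x)) {k : γ}
    (hk : k ∈ activeColumns x) : marginal S (predictorOf S p x) (p k) = colMass x k := by
  simp only [marginal_eq_colMass, colMass, jointLaw_predictorOf hx hp hk]

theorem kappa_predictorOf (hx : ∀ i k, 0 ≤ x i k) (hp : Set.InjOn p (activeColumns x)) {k : γ}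
    (hk : k ∈ activeColumns x) :
    kappa S (predictorOf S p x) (p k) = colMean S.theta x k := by
  simp only [kappa_eq_colMean, colMean, colMass, jointLaw_predictorOf hx hp hk]

theorem suppF_predictorOf (hx : ∀ i k, 0 ≤ x i k) (hp : Set.InjOn p (activeColumns x)) :
    suppF (predictorOf S p x) = (activeColumns x).image p := by
  ext q
  simp only [Finset.mem_image, mem_suppF, mem_activeColumns]
  constructor
  · rintro ⟨i, hi⟩
    obtain ⟨k, hk, rfl⟩ :=
      Finset.mem_image.1 (support_predictorOf_subset i (Finsupp.mem_support_iff.2 hi))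
    exact ⟨k, colMass_pos_of_ne_zero (fun i => hx i k) (Finset.mem_filter.1 hk).2, rfl⟩
  · rintro ⟨k, hk, rfl⟩
    obtain ⟨i, -, hi⟩ := Finset.exists_ne_zero_of_sum_ne_zero hk.ne'
    refine ⟨i, right_ne_zero_of_mul (a := S.lam i) ?_⟩
    rwa [← jointLaw_predictorOf hx hp (mem_activeColumns.2 hk)] at hi

theorem ECE_predictorOf (hx : ∀ i k, 0 ≤ x i k) (hp : Set.InjOn p (activeColumns x)) :
    ECE S 1 (predictorOf S p x) = totalBias S.theta p x := by
  rw [ECE_one, suppF_predictorOf hx hp, Finset.sum_image hp, totalBias]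
  calc ∑ k ∈ activeColumns x, marginal S (predictorOf S p x) (p k) *
        |kappa S (predictorOf S p x) (p k) - p k|
      = ∑ k ∈ activeColumns x, |colBias S.theta p x k| :=
        Finset.sum_congr rfl fun k hk => by
          rw [marginal_predictorOf hx hp hk, kappa_predictorOf hx hp hk,
            abs_colBias fun i => hx i k]
    _ = ∑ k, |colBias S.theta p x k| :=
        Finset.sum_subset (Finset.subset_univ _) fun k _ hk => by
          rw [abs_colBias fun i => hx i k, (colMass_nonneg fun i => hx i k).antisymm'
            (not_lt.1 (mem_activeColumns.not.1 hk)), zero_mul]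

theorem filter_kappa_predictorOf (hx : ∀ i k, 0 ≤ x i k) (hp : Set.InjOn p (activeColumns x))
    (q : ℝ) :
    {r ∈ suppF (predictorOf S p x) | kappa S (predictorOf S p x) r = q} =
      ({k ∈ activeColumns x | colMean S.theta x k = q} : Finset γ).image p := by
  rw [suppF_predictorOf hx hp, Finset.filter_image]
  congr 1
  exact Finset.filter_congr fun k hk => by rw [kappa_predictorOf hx hp hk]

end PredictorOf

end Predictors

theorem statement7_general {n : ℕ} (S : Setup n) {ε : ℝ} (hε : 0 ≤ ε) {U : ℝ → ℝ}
    (hUsc : UpperSemicontinuousOn U (Set.Icc (0 : ℝ) 1)) :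
    ∃ (c : ℝ) (fstar : Fin n → ℝ →₀ ℝ), c ∈ Set.Icc (0 : ℝ) 1 ∧
      IsPredictor fstar ∧ ECE S 1 fstar ≤ ε ∧
      (∀ f : Fin n → ℝ →₀ ℝ, IsPredictor f → ECE S 1 f ≤ ε →
        payoffEI S U f ≤ payoffEI S U fstar) ∧
      (∀ p ∈ suppF fstar, p ≤ c → p ≤ kappa S fstar p) ∧
      (∀ p ∈ suppF fstar, c ≤ p → kappa S fstar p ≤ p) ∧
      (suppF fstar).card ≤ n + 1 ∧
      (∀ i, (fstar i).support.card ≤ 4) ∧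
      ∀ q : ℝ, ((suppF fstar).filter fun p => kappa S fstar p = q).card ≤ 2 := by
  obtain ⟨p, x, h⟩ := exists_isLexOptimal (γ := Fin (n + 3)) (fun i => (S.lam_pos i).le)
    S.lam_sum S.theta_mem hε hUsc
  have hp := h.injOn_activeColumns
  obtain ⟨c, hc, hthreshold⟩ := h.exists_threshold S.theta_mem
  have hsupp := suppF_predictorOf (S := S) h.nonneg hp
  refine ⟨c, predictorOf S p x, hc, isPredictor_predictorOf h.toIsFeasible,
    (ECE_predictorOf h.nonneg hp).trans_le h.totalBias_le, fun f hf hE => ?_, ?_, ?_, ?_,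
    fun i => ?_, fun q => ?_⟩
  · obtain ⟨p', x', h', hvalue⟩ :=
      exists_isFeasible_value_eq_payoffEI (γ := Fin (n + 3)) (by simp) U hf hE
    rw [payoffEI_predictorOf, ← hvalue]
    exact h.value_le p' x' h'
  · rw [hsupp, Finset.forall_mem_image]
    exact fun k hk => kappa_predictorOf (S := S) h.nonneg hp hk ▸ (hthreshold k hk).1
  · rw [hsupp, Finset.forall_mem_image]
    exact fun k hk => kappa_predictorOf (S := S) h.nonneg hp hk ▸ (hthreshold k hk).2
  · rw [hsupp]
    exact Finset.card_image_le.trans (by simpa using h.card_activeColumns_le)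
  · exact ((Finset.card_le_card (support_predictorOf_subset i)).trans
      Finset.card_image_le).trans (h.card_row_le i)
  · rw [filter_kappa_predictorOf h.nonneg hp]
    exact Finset.card_image_le.trans (h.card_colMean_fiber_le q)

/-- Bounds on the number of predictions of an optimal
`(ε, ℓ_1)`-calibrated predictor with the miscalibration structure: at most `n + 2`
predictions overall, at most `4` per event, and at most `2` per true expected outcome
(with one of the two in the under- or over-confidence intervals when there are two). -/
theorem statement7 {n : ℕ} (S : Setup n) (ε : ℝ) (hε : 0 ≤ ε)
    (U : ℝ → ℝ) (hU0 : ∀ p ∈ Set.Icc (0 : ℝ) 1, 0 ≤ U p)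
    (hUsc : UpperSemicontinuousOn U (Set.Icc (0 : ℝ) 1)) :
    ∃ (pL pH : ℝ) (fstar : Fin n → ℝ →₀ ℝ),
      0 ≤ pL ∧ pL ≤ pH ∧ pH ≤ 1 ∧
      IsPredictor fstar ∧ ECE S 1 fstar ≤ ε ∧
      (∀ f : Fin n → ℝ →₀ ℝ, IsPredictor f → ECE S 1 f ≤ ε →
        payoffEI S U f ≤ payoffEI S U fstar) ∧
      (∀ p ∈ suppF fstar, p ≤ pL → p ≤ kappa S fstar p) ∧
      (∀ p ∈ suppF fstar, pL ≤ p → p ≤ pH → p = kappa S fstar p) ∧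
      (∀ p ∈ suppF fstar, pH ≤ p → kappa S fstar p ≤ p) ∧
      (suppF fstar).card ≤ n + 2 ∧
      (∀ i, (fstar i).support.card ≤ 4) ∧
      (∀ q : ℝ, ((suppF fstar).filter fun p => kappa S fstar p = q).card ≤ 2 ∧
        (((suppF fstar).filter fun p => kappa S fstar p = q).card = 2 →
          ∃ p ∈ (suppF fstar).filter fun p => kappa S fstar p = q,
            p ≤ pL ∨ pH ≤ p)) := by
  obtain ⟨c, f, hc, hf, hE, hopt, hlow, hhigh, hcard, hevent, hfiber⟩ :=
    statement7_general S hε hUsc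
  refine ⟨c, c, f, hc.1, le_rfl, hc.2, hf, hE, hopt, hlow,
    fun p hp hcp hpc => (hlow p hp hpc).antisymm (hhigh p hp hcp), hhigh, hcard.trans (by lia),
    hevent, fun q => ⟨hfiber q, fun htwo => ?_⟩⟩
  obtain ⟨r, hr⟩ := Finset.card_pos.1 (htwo ▸ Nat.two_pos)
  exact ⟨r, hr, le_total r c⟩

end PersuasiveCalibration
end
end

section
/- (Contracting predictions.) Let g ∈ MPC(λ) be a finitely supported distribution on [0,1], let p_1, p_2 ∈ supp(g) be distinct, and set p† = (g(p_1)·p_1 + g(p_2)·p_2)/(g(p_1) + g(p_2)). Define the distribution g† on [0,1] by g†(p) = g(p) for all p ∈ [0,1]\{p_1, p_2, p†}, g†(p†) = g(p†) + g(p_1) + g(p_2), and g†(p_1) = g†(p_2) = 0 whenever p_1, p_2 ≠ p†. Then g† is a finitely supported probability distribution on [0,1] and g† ∈ MPC(λ). -/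
open Finset

noncomputable section

namespace PersuasiveCalibration

variable {n : ℕ}

variable {A σT : Type*}

/-!
Merging two atoms into one at their barycentre lowers the expectation of every convex function
(Jensen's inequality). Since `∫₀ˢ M = 𝔼[(s - q)⁺]` for a distribution on `[0, 1]` with CDF `M`, and
`q ↦ (s - q)⁺` is convex and, on `[0, 1]`, affine for `s = 1`, a decrease in the convex order is a
mean-preserving contraction. Membership in `MPC(λ)` then follows by transitivity.
-/

open Finsupp (linearCombination)

variable {μ ν : ℝ →₀ ℝ}

/-- `μ` is below `ν` in the convex order: every convex function has a smaller expectation under `μ`.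
The expectation of `φ` under `μ` is `linearCombination ℝ φ μ`. -/
def ConvexLE (μ ν : ℝ →₀ ℝ) : Prop :=
  ∀ φ : ℝ → ℝ, ConvexOn ℝ Set.univ φ → linearCombination ℝ φ μ ≤ linearCombination ℝ φ ν

/-- `μ` is a mean-preserving contraction of `ν`, for distributions supported in `[0, 1]`. It is the
analogue of `MPCprior` with an arbitrary finitely supported `ν` in place of the prior. -/
def IsMPC (μ ν : ℝ →₀ ℝ) : Prop :=
  (∀ s ∈ Set.Icc (0 : ℝ) 1, (∫ x in (0 : ℝ)..s, cdf μ x) ≤ ∫ x in (0 : ℝ)..s, cdf ν x) ∧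
    (∫ x in (0 : ℝ)..1, cdf μ x) = ∫ x in (0 : ℝ)..1, cdf ν x

theorem IsMPC.mpcPrior {S : Setup n} (h : IsMPC μ ν) (hν : MPCprior S ν) : MPCprior S μ :=
  ⟨fun s hs => (h.1 s hs).trans (hν.1 s hs), h.2.trans hν.2⟩

section LinearCombination

variable {α R : Type*} [Semiring R]

theorem linearCombination_congr_on_support {M : Type*} [AddCommMonoid M] [Module R M]
    {f : α →₀ R} {φ ψ : α → M} (h : ∀ i ∈ f.support, φ i = ψ i) :
    linearCombination R φ f = linearCombination R ψ f :=
  Finsupp.sum_congr fun i hi => congrArg (f i • ·) (h i hi)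

theorem linearCombination_const_one (f : α →₀ R) :
    linearCombination R (fun _ => (1 : R)) f = ∑ i ∈ f.support, f i := by
  simp [Finsupp.linearCombination_apply, Finsupp.sum]

theorem linearCombination_eq_erase_erase_add {M : Type*} [AddCommMonoid M] [Module R M]
    (f : α →₀ R) {i j : α} (hij : i ≠ j) (φ : α → M) :
    linearCombination R φ f =
      linearCombination R φ ((f.erase i).erase j) + (f i • φ i + f j • φ j) := by
  have split_atoms :
      (f.erase i).erase j + (Finsupp.single i (f i) + Finsupp.single j (f j)) = f := by
    rw [← Finsupp.erase_ne hij.symm, add_comm (Finsupp.single i _), ← add_assoc,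
      Finsupp.erase_add_single, Finsupp.erase_add_single]
  conv_lhs => rw [← split_atoms]
  simp only [map_add, Finsupp.linearCombination_single]

end LinearCombination

theorem intervalIntegrable_step (q a b : ℝ) :
    IntervalIntegrable (fun x : ℝ => if q ≤ x then (1 : ℝ) else 0) MeasureTheory.volume a b := by
  refine Monotone.intervalIntegrable fun x y hxy => ?_
  split_ifs <;> linarith

theorem hasDerivWithinAt_max_sub_zero (q x : ℝ) :
    HasDerivWithinAt (fun y => max (y - q) 0) (if q ≤ x then 1 else 0) (Set.Ioi x) x := by
  split_ifs with hqx
  · refine ((hasDerivAt_id x).sub_const q).hasDerivWithinAt.congr (fun y hy => ?_) ?_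
    · exact max_eq_left (sub_nonneg.2 (hqx.trans (le_of_lt hy)))
    · exact max_eq_left (sub_nonneg.2 hqx)
  · refine ((hasDerivAt_const x (0 : ℝ)).congr_of_eventuallyEq ?_).hasDerivWithinAt
    filter_upwards [Iio_mem_nhds (not_le.1 hqx)] with y hy
    exact max_eq_right (sub_nonpos.2 (le_of_lt hy))

theorem integral_step (q a b : ℝ) :
    (∫ x in a..b, if q ≤ x then (1 : ℝ) else 0) = max (b - q) 0 - max (a - q) 0 :=
  intervalIntegral.integral_eq_sub_of_hasDeriv_right (f := fun x => max (x - q) 0)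
    (by fun_prop) (fun x _ => hasDerivWithinAt_max_sub_zero q x) (intervalIntegrable_step q a b)

theorem integral_cdf (μ : ℝ →₀ ℝ) (a b : ℝ) :
    ∫ x in a..b, cdf μ x = linearCombination ℝ (fun q => max (b - q) 0 - max (a - q) 0) μ := by
  have cdf_eq_sum_steps (x : ℝ) : cdf μ x = ∑ q ∈ μ.support, μ q * if q ≤ x then 1 else 0 := by
    simp [cdf, Finset.sum_filter]
  simp only [cdf_eq_sum_steps]
  rw [intervalIntegral.integral_finsetSum fun q _ => (intervalIntegrable_step q a b).const_mul _]
  simp only [intervalIntegral.integral_const_mul, integral_step,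
    Finsupp.linearCombination_apply, Finsupp.sum, smul_eq_mul]

theorem integral_cdf_of_support_nonneg (hμ : ∀ q ∈ μ.support, 0 ≤ q) (s : ℝ) :
    ∫ x in (0 : ℝ)..s, cdf μ x = linearCombination ℝ (fun q => max (s - q) 0) μ := by
  rw [integral_cdf]
  refine linearCombination_congr_on_support fun q hq => ?_
  rw [max_eq_right (by linarith [hμ q hq] : 0 - q ≤ 0), sub_zero]

theorem integral_cdf_zero_one (hμ : ∀ q ∈ μ.support, q ∈ Set.Icc (0 : ℝ) 1) :
    ∫ x in (0 : ℝ)..1, cdf μ x = linearCombination ℝ (fun q => 1 - q) μ := by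
  rw [integral_cdf_of_support_nonneg fun q hq => (hμ q hq).1]
  exact linearCombination_congr_on_support fun q hq => max_eq_left (sub_nonneg.2 (hμ q hq).2)

theorem convexOn_const_sub (s : ℝ) : ConvexOn ℝ Set.univ fun q : ℝ => s - q :=
  (convexOn_const s convex_univ).sub (concaveOn_id convex_univ)

theorem concaveOn_const_sub (s : ℝ) : ConcaveOn ℝ Set.univ fun q : ℝ => s - q :=
  (concaveOn_const s convex_univ).sub (convexOn_id convex_univ)

namespace ConvexLE

theorem linearCombination_eq (h : ConvexLE μ ν) {φ : ℝ → ℝ} (hconvex : ConvexOn ℝ Set.univ φ)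
    (hconcave : ConcaveOn ℝ Set.univ φ) :
    linearCombination ℝ φ μ = linearCombination ℝ φ ν := by
  refine le_antisymm (h φ hconvex) ?_
  have hneg := h (-φ) hconcave.neg
  simpa [Finsupp.linearCombination_apply, Finsupp.sum] using hneg

theorem sum_support_eq (h : ConvexLE μ ν) : ∑ p ∈ μ.support, μ p = ∑ p ∈ ν.support, ν p := by
  simp only [← linearCombination_const_one]
  exact h.linearCombination_eq (convexOn_const 1 convex_univ) (concaveOn_const 1 convex_univ)

theorem isMPC (h : ConvexLE μ ν) (hμ : ∀ q ∈ μ.support, q ∈ Set.Icc (0 : ℝ) 1)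
    (hν : ∀ q ∈ ν.support, q ∈ Set.Icc (0 : ℝ) 1) : IsMPC μ ν := by
  constructor
  · intro s _
    rw [integral_cdf_of_support_nonneg fun q hq => (hμ q hq).1,
      integral_cdf_of_support_nonneg fun q hq => (hν q hq).1]
    exact h _ ((convexOn_const_sub s).sup (convexOn_const 0 convex_univ))
  · rw [integral_cdf_zero_one hμ, integral_cdf_zero_one hν]
    exact h.linearCombination_eq (convexOn_const_sub 1) (concaveOn_const_sub 1)

end ConvexLE

/-- The barycentre of the atoms of `μ` at `x` and `y`; junk when `μ x + μ y = 0`. -/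
def barycenter (μ : ℝ →₀ ℝ) (x y : ℝ) : ℝ :=
  (μ x * x + μ y * y) / (μ x + μ y)

/-- The contraction of `μ` that moves its atoms at `x` and `y` to their barycentre, adding to the
mass already there. For `x = y` it doubles the atom, so it is only meaningful for `x ≠ y`. -/
def mergeAtoms (μ : ℝ →₀ ℝ) (x y : ℝ) : ℝ →₀ ℝ :=
  (μ.erase x).erase y + Finsupp.single (barycenter μ x y) (μ x + μ y)

section Merge

variable {x y : ℝ}

theorem barycenter_comm (μ : ℝ →₀ ℝ) (x y : ℝ) : barycenter μ x y = barycenter μ y x := by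
  simp only [barycenter, add_comm]

theorem barycenter_ne_left (hsum : μ x + μ y ≠ 0) (hy : μ y ≠ 0) (hxy : x ≠ y) :
    barycenter μ x y ≠ x := by
  rw [barycenter, Ne, div_eq_iff hsum]
  intro heq
  exact hxy (mul_left_cancel₀ hy (by linarith))

theorem barycenter_ne_right (hsum : μ x + μ y ≠ 0) (hx : μ x ≠ 0) (hxy : x ≠ y) :
    barycenter μ x y ≠ y := by
  rw [barycenter_comm]
  exact barycenter_ne_left (by rwa [add_comm]) hx hxy.symm

theorem barycenter_eq_convex_combination (μ : ℝ →₀ ℝ) (x y : ℝ) :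
    barycenter μ x y = (μ x / (μ x + μ y)) • x + (μ y / (μ x + μ y)) • y := by
  simp only [barycenter, smul_eq_mul]
  ring

theorem barycenter_mem {C : Set ℝ} (hC : Convex ℝ C) (hxC : x ∈ C) (hyC : y ∈ C)
    (hx : 0 ≤ μ x) (hy : 0 ≤ μ y) (hsum : 0 < μ x + μ y) : barycenter μ x y ∈ C := by
  rw [barycenter_eq_convex_combination]
  exact convex_iff_div.1 hC hxC hyC hx hy hsum

theorem mul_map_barycenter_le {C : Set ℝ} {φ : ℝ → ℝ} (hφ : ConvexOn ℝ C φ)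
    (hxC : x ∈ C) (hyC : y ∈ C) (hx : 0 ≤ μ x) (hy : 0 ≤ μ y) (hsum : 0 < μ x + μ y) :
    (μ x + μ y) * φ (barycenter μ x y) ≤ μ x * φ x + μ y * φ y := by
  have jensen := (convexOn_iff_div.1 hφ).2 hxC hyC hx hy hsum
  rw [← barycenter_eq_convex_combination] at jensen
  calc (μ x + μ y) * φ (barycenter μ x y)
      ≤ (μ x + μ y) * ((μ x / (μ x + μ y)) • φ x + (μ y / (μ x + μ y)) • φ y) := by gcongr
    _ = μ x * φ x + μ y * φ y := by
        simp only [smul_eq_mul]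
        field_simp

theorem convexLE_mergeAtoms (hxy : x ≠ y) (hx : 0 ≤ μ x) (hy : 0 ≤ μ y)
    (hsum : 0 < μ x + μ y) : ConvexLE (mergeAtoms μ x y) μ := by
  intro φ hφ
  rw [linearCombination_eq_erase_erase_add μ hxy φ, mergeAtoms, map_add,
    Finsupp.linearCombination_single]
  gcongr
  exact mul_map_barycenter_le hφ (Set.mem_univ x) (Set.mem_univ y) hx hy hsum

theorem mergeAtoms_nonneg (hμ : ∀ p, 0 ≤ μ p) (p : ℝ) : 0 ≤ mergeAtoms μ x y p := by
  have hsum : 0 ≤ μ x + μ y := add_nonneg (hμ x) (hμ y)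
  simp only [mergeAtoms, Finsupp.add_apply, Finsupp.erase_apply, Finsupp.single_apply]
  split_ifs <;> simp [hμ, hsum, add_nonneg]

theorem support_mergeAtoms_subset :
    (mergeAtoms μ x y).support ⊆ insert (barycenter μ x y) μ.support := by
  intro p hp
  by_contra hp'
  simp only [Finset.mem_insert, Finsupp.mem_support_iff, not_or, not_not] at hp'
  simp [mergeAtoms, Finsupp.erase_apply, hp'.2, Ne.symm hp'.1] at hp

theorem mem_of_mem_support_mergeAtoms {C : Set ℝ} (hC : Convex ℝ C)
    (hμ : ∀ p ∈ μ.support, p ∈ C) (hx : 0 < μ x) (hy : 0 < μ y) :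
    ∀ p ∈ (mergeAtoms μ x y).support, p ∈ C := by
  intro p hp
  rcases Finset.mem_insert.1 (support_mergeAtoms_subset hp) with rfl | hp
  · exact barycenter_mem hC (hμ x (Finsupp.mem_support_iff.2 hx.ne'))
      (hμ y (Finsupp.mem_support_iff.2 hy.ne')) hx.le hy.le (add_pos hx hy)
  · exact hμ p hp

theorem isDist_mergeAtoms (hμ : IsDist μ) (hxy : x ≠ y) (hx : 0 < μ x) (hy : 0 < μ y) :
    IsDist (mergeAtoms μ x y) :=
  ⟨mergeAtoms_nonneg hμ.1, mem_of_mem_support_mergeAtoms (convex_Icc 0 1) hμ.2.1 hx hy,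
    (convexLE_mergeAtoms hxy hx.le hy.le (add_pos hx hy)).sum_support_eq.trans hμ.2.2⟩

theorem isMPC_mergeAtoms (hμ : ∀ p ∈ μ.support, p ∈ Set.Icc (0 : ℝ) 1) (hxy : x ≠ y)
    (hx : 0 < μ x) (hy : 0 < μ y) : IsMPC (mergeAtoms μ x y) μ :=
  (convexLE_mergeAtoms hxy hx.le hy.le (add_pos hx hy)).isMPC
    (mem_of_mem_support_mergeAtoms (convex_Icc 0 1) hμ hx hy) hμ

theorem eq_mergeAtoms (hbx : barycenter μ x y ≠ x) (hby : barycenter μ x y ≠ y)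
    (hoff : ∀ p, p ≠ x → p ≠ y → p ≠ barycenter μ x y → ν p = μ p)
    (hbary : ν (barycenter μ x y) = μ (barycenter μ x y) + μ x + μ y)
    (hνx : ν x = 0) (hνy : ν y = 0) : ν = mergeAtoms μ x y := by
  ext p
  simp only [mergeAtoms, Finsupp.add_apply, Finsupp.erase_apply, Finsupp.single_apply]
  split_ifs <;> grind

end Merge

/-- Contracting two support points of `g ∈ MPC(λ)` onto their
barycenter yields again a finitely supported probability distribution in `MPC(λ)`. -/
theorem statement9 {n : ℕ} (S : Setup n) (g : ℝ →₀ ℝ) (hg : IsDist g)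
    (hmpc : MPCprior S g)
    (p₁ p₂ : ℝ) (h₁ : p₁ ∈ g.support) (h₂ : p₂ ∈ g.support) (hne : p₁ ≠ p₂)
    (pd : ℝ) (hpd : pd = (g p₁ * p₁ + g p₂ * p₂) / (g p₁ + g p₂))
    (gd : ℝ →₀ ℝ)
    (hgd1 : ∀ p, p ≠ p₁ → p ≠ p₂ → p ≠ pd → gd p = g p)
    (hgd2 : gd pd = g pd + g p₁ + g p₂)
    (hgd3 : p₁ ≠ pd → gd p₁ = 0) (hgd4 : p₂ ≠ pd → gd p₂ = 0) :
    IsDist gd ∧ MPCprior S gd := by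
  have hpos {p : ℝ} (hp : p ∈ g.support) : 0 < g p :=
    (hg.1 p).lt_of_ne' (Finsupp.mem_support_iff.1 hp)
  have hsum : g p₁ + g p₂ ≠ 0 := (add_pos (hpos h₁) (hpos h₂)).ne'
  have hpd₁ : barycenter g p₁ p₂ ≠ p₁ := barycenter_ne_left hsum (hpos h₂).ne' hne
  have hpd₂ : barycenter g p₁ p₂ ≠ p₂ := barycenter_ne_right hsum (hpos h₁).ne' hne
  obtain rfl : pd = barycenter g p₁ p₂ := hpd
  obtain rfl : gd = mergeAtoms g p₁ p₂ :=
    eq_mergeAtoms hpd₁ hpd₂ hgd1 hgd2 (hgd3 hpd₁.symm) (hgd4 hpd₂.symm)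
  exact ⟨isDist_mergeAtoms hg hne (hpos h₁) (hpos h₂),
    (isMPC_mergeAtoms hg.2.1 hne (hpos h₁) (hpos h₂)).mpcPrior hmpc⟩

end PersuasiveCalibration
end
end

section
/- (Monotonicity of predictions with respect to true expected outcomes.) Let (g, χ) be a feasible solution of LP-TwoStep with t = 1. Then there exists χ† such that (g, χ†) is feasible for LP-TwoStep with t = 1, the objective values agree (Σ_{q,p} χ†(q,p)·U(p) = Σ_{q,p} χ(q,p)·U(p)), the calibration cost does not increase (Σ_{q,p} χ†(q,p)·|q−p| ≤ Σ_{q,p} χ(q,p)·|q−p|), and for all q_1 < q_2 in supp(g): max{p : χ†(q_1,p) > 0} ≤ min{p : χ†(q_2,p) > 0}. -/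
open Finset

noncomputable section

namespace PersuasiveCalibration

variable {n : ℕ}

variable {A σT : Type*}

/-! A crossing is a pair of atoms `(a₁, b₂)`, `(a₂, b₁)` with `a₁ < a₂` and `b₁ < b₂`; uncrossing it
moves mass to `(a₁, b₁)` and `(a₂, b₂)`, which lowers every Monge cost and strictly raises
`∑ χ(a, b) φ(a) ψ(b)` for strictly increasing `φ`, `ψ`. The plans whose Monge costs are all at most
those of `χ` form a compact set, and a maximizer of this sum over it has no crossings.
Functions of one coordinate are Monge together with their negatives, so such a plan keeps both
marginals of `χ`, and `|q - p| ^ t` is Monge because it is a convex function of `q - p`. -/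

section Uncross

variable {α β : Type*} [DecidableEq α] [DecidableEq β]

/-- The plan obtained from `f` by moving mass `d` from each of the crossing atoms `(a₁, b₂)` and
`(a₂, b₁)` to the parallel atoms `(a₁, b₁)` and `(a₂, b₂)`. -/
def uncross (f : α × β → ℝ) (a₁ a₂ : α) (b₁ b₂ : β) (d : ℝ) : α × β → ℝ :=
  f - Pi.single (a₁, b₂) d - Pi.single (a₂, b₁) d + Pi.single (a₁, b₁) d + Pi.single (a₂, b₂) d

lemma uncross_nonneg {f : α × β → ℝ} (hf : 0 ≤ f) {a₁ a₂ : α} {b₁ b₂ : β} (ha : a₁ ≠ a₂) {d : ℝ}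
    (hd : 0 ≤ d) (h₁₂ : d ≤ f (a₁, b₂)) (h₂₁ : d ≤ f (a₂, b₁)) :
    0 ≤ uncross f a₁ a₂ b₁ b₂ d := by
  have hremoved : 0 ≤ f - Pi.single (a₁, b₂) d - Pi.single (a₂, b₁) d := fun x => by
    have := hf x
    by_cases hx₁₂ : x = (a₁, b₂) <;> by_cases hx₂₁ : x = (a₂, b₁) <;>
      simp_all
  have hsingle (x : α × β) : 0 ≤ (Pi.single x d : α × β → ℝ) := Pi.single_nonneg.2 hd
  exact add_nonneg (add_nonneg hremoved (hsingle _)) (hsingle _)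

lemma uncross_dotProduct [Fintype α] [Fintype β] (f c : α × β → ℝ) (a₁ a₂ : α) (b₁ b₂ : β)
    (d : ℝ) :
    uncross f a₁ a₂ b₁ b₂ d ⬝ᵥ c =
      f ⬝ᵥ c - d * (c (a₁, b₂) + c (a₂, b₁) - (c (a₁, b₁) + c (a₂, b₂))) := by
  simp only [uncross, add_dotProduct, sub_dotProduct, single_dotProduct]
  ring

end Uncross

section Monge

variable {α β : Type*} [LinearOrder α] [LinearOrder β]

/-- Monge (submodular) cost functions on a product of two linear orders: matching in order is
never more expensive than matching crosswise. -/
def IsMonge (c : α × β → ℝ) : Prop :=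
  ∀ ⦃a₁ a₂⦄, a₁ < a₂ → ∀ ⦃b₁ b₂⦄, b₁ < b₂ → c (a₁, b₁) + c (a₂, b₂) ≤ c (a₁, b₂) + c (a₂, b₁)

/-- A plan is comonotone if no two of its atoms cross: a larger first coordinate is never paired
with a smaller second coordinate. -/
def IsComonotone (f : α × β → ℝ) : Prop :=
  ∀ ⦃a₁ a₂⦄, a₁ < a₂ → ∀ ⦃b₁ b₂⦄, 0 < f (a₁, b₁) → 0 < f (a₂, b₂) → b₁ ≤ b₂

lemma isMonge_comp_fst (u : α → ℝ) : IsMonge fun x : α × β => u x.1 :=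
  fun _ _ _ _ _ _ => le_rfl

lemma isMonge_comp_snd (v : β → ℝ) : IsMonge fun x : α × β => v x.2 :=
  fun _ _ _ _ _ _ => (add_comm _ _).le

lemma IsMonge.comp_prodMap {γ δ : Type*} [LinearOrder γ] [LinearOrder δ] {c : α × β → ℝ}
    (hc : IsMonge c) {φ : γ → α} {ψ : δ → β} (hφ : StrictMono φ) (hψ : StrictMono ψ) :
    IsMonge (c ∘ Prod.map φ ψ) :=
  fun _ _ ha _ _ hb => hc (hφ ha) (hψ hb)

variable [Fintype α] [Fintype β]

/-- The plans that cost at most as much as `f` for every Monge cost, that is, those above `f` in the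
supermodular order; they have the same marginals as `f`. -/
def mongeDominated (f : α × β → ℝ) : Set (α × β → ℝ) :=
  {f' | 0 ≤ f' ∧ ∀ c, IsMonge c → f' ⬝ᵥ c ≤ f ⬝ᵥ c}

lemma uncross_mem_mongeDominated {f f' : α × β → ℝ} (hf' : f' ∈ mongeDominated f) {a₁ a₂ : α}
    {b₁ b₂ : β} (ha : a₁ < a₂) (hb : b₁ < b₂) {d : ℝ} (hd : 0 ≤ d) (h₁₂ : d ≤ f' (a₁, b₂))
    (h₂₁ : d ≤ f' (a₂, b₁)) : uncross f' a₁ a₂ b₁ b₂ d ∈ mongeDominated f := by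
  refine ⟨uncross_nonneg hf'.1 ha.ne hd h₁₂ h₂₁, fun c hc => ?_⟩
  rw [uncross_dotProduct]
  exact (sub_le_self _ (mul_nonneg hd (sub_nonneg.2 (hc ha hb)))).trans (hf'.2 c hc)

lemma isClosed_mongeDominated (f : α × β → ℝ) : IsClosed (mongeDominated f) := by
  simp only [mongeDominated, Set.ofPred_and, Set.ofPred_forall]
  refine (isClosed_le continuous_const continuous_id).inter ?_
  exact isClosed_iInter fun c => isClosed_iInter fun _ =>
    isClosed_le (continuous_id.dotProduct continuous_const) continuous_const

lemma isCompact_mongeDominated (f : α × β → ℝ) : IsCompact (mongeDominated f) := by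
  refine (isCompact_Icc (a := 0) (b := fun _ => f ⬝ᵥ 1)).of_isClosed_subset
    (isClosed_mongeDominated f) fun f' hf' => ⟨hf'.1, fun x => ?_⟩
  calc f' x ≤ ∑ y, f' y := single_le_sum (fun y _ => hf'.1 y) (mem_univ x)
    _ = f' ⬝ᵥ 1 := (dotProduct_one f').symm
    _ ≤ f ⬝ᵥ 1 := hf'.2 1 (isMonge_comp_fst 1)

lemma exists_isComonotone_mem_mongeDominated {f : α × β → ℝ} (hf : 0 ≤ f) :
    ∃ f' ∈ mongeDominated f, IsComonotone f' := by
  obtain ⟨φ⟩ := Order.embedding_from_countable_to_dense α ℝ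
  obtain ⟨ψ⟩ := Order.embedding_from_countable_to_dense β ℝ
  let potential : α × β → ℝ := fun x => φ x.1 * ψ x.2
  obtain ⟨f', hf', hmax⟩ := (isCompact_mongeDominated f).exists_isMaxOn ⟨f, hf, fun _ _ => le_rfl⟩
    (f := fun g => g ⬝ᵥ potential) (continuous_id.dotProduct continuous_const).continuousOn
  refine ⟨f', hf', fun a₁ a₂ ha b₂ b₁ h₁₂ h₂₁ => le_of_not_gt fun hb => ?_⟩
  set d := min (f' (a₁, b₂)) (f' (a₂, b₁))
  have hd : 0 < d := lt_min h₁₂ h₂₁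
  have hle : uncross f' a₁ a₂ b₁ b₂ d ⬝ᵥ potential ≤ f' ⬝ᵥ potential :=
    hmax (uncross_mem_mongeDominated hf' ha hb hd.le (min_le_left _ _) (min_le_right _ _))
  have hgain : 0 < d * ((φ a₂ - φ a₁) * (ψ b₂ - ψ b₁)) :=
    mul_pos hd (mul_pos (sub_pos.2 (φ.strictMono ha)) (sub_pos.2 (ψ.strictMono hb)))
  rw [uncross_dotProduct] at hle
  linarith

end Monge

section FinitelySupported

lemma sum_embDomain_mul_eq_dotProduct {ι κ : Type*} [Fintype ι] (e : ι ↪ κ) (v : ι →₀ ℝ)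
    (c : κ → ℝ) : ((v.embDomain e).sum fun x m => m * c x) = v ⬝ᵥ (c ∘ e) := by
  rw [Finsupp.sum_embDomain, Finsupp.sum_fintype _ _ fun _ => zero_mul _]
  rfl

variable {α β : Type*} [LinearOrder α] [LinearOrder β]

lemma IsComonotone.embDomain_prodMap {γ δ : Type*} [LinearOrder γ] [LinearOrder δ]
    {v : γ × δ →₀ ℝ} (hv : IsComonotone v) (φ : γ ↪o α) (ψ : δ ↪o β) :
    IsComonotone (v.embDomain (φ.toEmbedding.prodMap ψ.toEmbedding)) := by
  have hrange {x : α × β} (hx : 0 < v.embDomain (φ.toEmbedding.prodMap ψ.toEmbedding) x) :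
      ∃ y, φ.toEmbedding.prodMap ψ.toEmbedding y = x :=
    not_not.1 fun hy => hx.ne' (Finsupp.embDomain_of_notMem_range _ _ _ hy)
  intro a₁ a₂ ha b₁ b₂ h₁ h₂
  obtain ⟨⟨i₁, j₁⟩, hx₁⟩ := hrange h₁
  obtain ⟨⟨i₂, j₂⟩, hx₂⟩ := hrange h₂
  rw [← hx₁, Finsupp.embDomain_apply_self] at h₁
  rw [← hx₂, Finsupp.embDomain_apply_self] at h₂
  obtain ⟨rfl, rfl⟩ := Prod.mk.inj hx₁
  obtain ⟨rfl, rfl⟩ := Prod.mk.inj hx₂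
  exact ψ.monotone (hv (φ.lt_iff_lt.1 ha) h₁ h₂)

/-- The converse of the supermodular order, on finitely supported plans: `χ'` costs at most as much
as `χ` for every Monge cost. -/
def MongeLE (χ' χ : α × β →₀ ℝ) : Prop :=
  ∀ c, IsMonge c → (χ'.sum fun x m => m * c x) ≤ χ.sum fun x m => m * c x

lemma MongeLE.sum_comp_fst_eq {χ' χ : α × β →₀ ℝ} (h : MongeLE χ' χ) (u : α → ℝ) :
    (χ'.sum fun x m => m * u x.1) = χ.sum fun x m => m * u x.1 := by
  have hneg := h _ (isMonge_comp_fst fun a => -u a)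
  simp only [mul_neg, Finsupp.sum_neg, neg_le_neg_iff] at hneg
  exact (h _ (isMonge_comp_fst u)).antisymm hneg

lemma MongeLE.sum_comp_snd_eq {χ' χ : α × β →₀ ℝ} (h : MongeLE χ' χ) (v : β → ℝ) :
    (χ'.sum fun x m => m * v x.2) = χ.sum fun x m => m * v x.2 := by
  have hneg := h _ (isMonge_comp_snd fun b => -v b)
  simp only [mul_neg, Finsupp.sum_neg, neg_le_neg_iff] at hneg
  exact (h _ (isMonge_comp_snd v)).antisymm hneg

theorem exists_isComonotone_mongeLE {χ : α × β →₀ ℝ} (hχ : 0 ≤ χ) :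
    ∃ χ' : α × β →₀ ℝ, 0 ≤ χ' ∧
      χ'.support ⊆ χ.support.image Prod.fst ×ˢ χ.support.image Prod.snd ∧
      IsComonotone χ' ∧ MongeLE χ' χ := by
  let φ := OrderEmbedding.subtype (· ∈ χ.support.image Prod.fst)
  let ψ := OrderEmbedding.subtype (· ∈ χ.support.image Prod.snd)
  let e := φ.toEmbedding.prodMap ψ.toEmbedding
  have hsupport : ↑χ.support ⊆ Set.range e := fun x hx =>
    ⟨(⟨x.1, mem_image_of_mem _ hx⟩, ⟨x.2, mem_image_of_mem _ hx⟩), rfl⟩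
  have hrestrict := Finsupp.embDomain_comapDomain hsupport
  set v := χ.comapDomain e e.injective.injOn
  obtain ⟨f, ⟨hf, hfv⟩, hcomonotone⟩ :=
    exists_isComonotone_mem_mongeDominated (f := v) fun x => hχ (e x)
  let w := Finsupp.equivFunOnFinite.symm f
  have hw : IsComonotone w := hcomonotone
  refine ⟨w.embDomain e, ?_, fun x hx => ?_, hw.embDomain_prodMap φ ψ, fun c hc => ?_⟩
  · rw [← Finsupp.embDomain_zero e]
    exact Finsupp.embDomain_mono e hf
  · obtain ⟨y, -, rfl⟩ := mem_map.1 (Finsupp.support_embDomain e w ▸ hx)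
    exact mem_product.2 ⟨y.1.2, y.2.2⟩
  · calc ((w.embDomain e).sum fun x m => m * c x)
        = f ⬝ᵥ (c ∘ e) := sum_embDomain_mul_eq_dotProduct e w c
      _ ≤ v ⬝ᵥ (c ∘ e) := hfv _ (hc.comp_prodMap φ.strictMono ψ.strictMono)
      _ = (v.embDomain e).sum fun x m => m * c x := (sum_embDomain_mul_eq_dotProduct e v c).symm
      _ = χ.sum fun x m => m * c x := by rw [hrestrict]

end FinitelySupported

lemma isMonge_comp_sub_of_convexOn {h : ℝ → ℝ} (hh : ConvexOn ℝ Set.univ h) :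
    IsMonge fun x : ℝ × ℝ => h (x.1 - x.2) := by
  intro a₁ a₂ ha b₁ b₂ hb
  have secant (y : ℝ) (hy₁ : a₁ - b₂ < y) (hy₂ : y < a₂ - b₁) :
      (a₂ - b₁ - (a₁ - b₂)) * h y ≤
        (a₂ - b₁ - y) * h (a₁ - b₂) + (y - (a₁ - b₂)) * h (a₂ - b₁) :=
    hh.secant_mono_aux1 (Set.mem_univ _) (Set.mem_univ _) hy₁ hy₂
  have hsecant₁ := secant (a₁ - b₁) (by linarith) (by linarith)
  have hsecant₂ := secant (a₂ - b₂) (by linarith) (by linarith)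
  refine le_of_mul_le_mul_left ?_ (show 0 < a₂ - b₁ - (a₁ - b₂) by linarith)
  linarith

lemma convexOn_univ_norm_rpow {E : Type*} [SeminormedAddCommGroup E] [NormedSpace ℝ E] {t : ℝ}
    (ht : 1 ≤ t) : ConvexOn ℝ Set.univ fun x : E => ‖x‖ ^ t := by
  refine ⟨convex_univ, fun x hx y hy a b ha hb hab => ?_⟩
  calc ‖a • x + b • y‖ ^ t ≤ (a • ‖x‖ + b • ‖y‖) ^ t :=
        Real.rpow_le_rpow (norm_nonneg _) (convexOn_univ_norm.2 hx hy ha hb hab) (by linarith)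
    _ ≤ a • ‖x‖ ^ t + b • ‖y‖ ^ t :=
        (convexOn_rpow ht).2 (norm_nonneg x) (norm_nonneg y) ha hb hab

lemma planMargQ_eq_sum (χ : ℝ × ℝ →₀ ℝ) (q : ℝ) :
    planMargQ χ q = χ.sum fun x m => m * if x.1 = q then 1 else 0 := by
  simp only [planMargQ, sum_filter, Finsupp.sum, mul_ite, mul_one, mul_zero]

lemma MongeLE.planCost_le {χ' χ : ℝ × ℝ →₀ ℝ} (h : MongeLE χ' χ) {t : ℝ} (ht : 1 ≤ t) :
    planCost t χ' ≤ planCost t χ :=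
  h _ (isMonge_comp_sub_of_convexOn (convexOn_univ_norm_rpow ht))

lemma MongeLE.planMargQ_eq {χ' χ : ℝ × ℝ →₀ ℝ} (h : MongeLE χ' χ) (q : ℝ) :
    planMargQ χ' q = planMargQ χ q := by
  simpa only [planMargQ_eq_sum] using h.sum_comp_fst_eq fun a => if a = q then 1 else 0

lemma MongeLE.LPobj_eq {χ' χ : ℝ × ℝ →₀ ℝ} (h : MongeLE χ' χ) (U : ℝ → ℝ) :
    LPobj U χ' = LPobj U χ :=
  h.sum_comp_snd_eq U

theorem statement10_general {n : ℕ} (S : Setup n) (ε : ℝ) {t : ℝ} (ht : 1 ≤ t) (U : ℝ → ℝ)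
    (χ : ℝ × ℝ →₀ ℝ) (g : ℝ →₀ ℝ) (h : LPFeasible S ε t χ g) :
    ∃ χ' : ℝ × ℝ →₀ ℝ, LPFeasible S ε t χ' g ∧ LPobj U χ' = LPobj U χ ∧
      planCost t χ' ≤ planCost t χ ∧ IsComonotone χ' := by
  obtain ⟨hχ, hmem, hcost, hmarg, hdist, hmpc⟩ := h
  obtain ⟨χ', hχ', hsupport, hcomonotone, hle⟩ := exists_isComonotone_mongeLE hχ
  have hmem' : ∀ x ∈ χ'.support, x.1 ∈ Set.Icc (0 : ℝ) 1 ∧ x.2 ∈ Set.Icc (0 : ℝ) 1 := by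
    intro x hx
    obtain ⟨hx₁, hx₂⟩ := mem_product.1 (hsupport hx)
    exact ⟨forall_mem_image.2 (fun y hy => (hmem y hy).1) _ hx₁,
      forall_mem_image.2 (fun y hy => (hmem y hy).2) _ hx₂⟩
  have hcost' := hle.planCost_le ht
  have hmarg' (q : ℝ) : planMargQ χ' q = g q := (hle.planMargQ_eq q).trans (hmarg q)
  exact ⟨χ', ⟨hχ', hmem', hcost'.trans hcost, hmarg', hdist, hmpc⟩, hle.LPobj_eq U, hcost',
    hcomonotone⟩

/-- Monotonicity of the predictions with respect to their true
expected outcomes: every feasible solution `(g, χ)` of LP-TwoStep with `t = 1` can be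
replaced by a feasible `(g, χ†)` with the same objective value, no larger calibration
cost, and monotone predictions. -/
theorem statement10 {n : ℕ} (S : Setup n) (ε : ℝ) (hε : 0 ≤ ε) (U : ℝ → ℝ)
    (hU0 : ∀ p ∈ Set.Icc (0 : ℝ) 1, 0 ≤ U p)
    (χ : ℝ × ℝ →₀ ℝ) (g : ℝ →₀ ℝ) (h : LPFeasible S ε 1 χ g) :
    ∃ χ' : ℝ × ℝ →₀ ℝ, LPFeasible S ε 1 χ' g ∧
      LPobj U χ' = LPobj U χ ∧
      (∑ x ∈ χ'.support, χ' x * |x.1 - x.2|) ≤ (∑ x ∈ χ.support, χ x * |x.1 - x.2|) ∧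
      ∀ q₁ q₂ : ℝ, q₁ ∈ g.support → q₂ ∈ g.support → q₁ < q₂ →
        ∀ p₁ p₂ : ℝ, 0 < χ' (q₁, p₁) → 0 < χ' (q₂, p₂) → p₁ ≤ p₂ := by
  obtain ⟨χ', hfeasible, hobj, hcost, hmono⟩ := statement10_general S ε le_rfl U χ g h
  exact ⟨χ', hfeasible, hobj, by simpa only [planCost, Real.rpow_one] using hcost,
    fun q₁ q₂ _ _ hq p₁ p₂ hp₁ hp₂ => hmono hq hp₁ hp₂⟩

end PersuasiveCalibration
end
end

section
/- Fix any t ≥ 1 and ε ≥ 0, and let χ be a feasible bi-event post-processing plan. Then the predictor f generated by χ is well-defined (each f_i is a finitely supported probability distribution on [0,1]) and is (ε,ℓ_t)-calibrated, i.e., ECE_t(f) ≤ ε. -/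
open Finset

noncomputable section

namespace PersuasiveCalibration

variable {n : ℕ}

variable {A σT : Type*}

/-!
The plan routes each tuple `(i, j, q, p)` of mass `χ` to the prediction `p`, splitting the mass
between the events `i` and `j` in the proportion that makes its mean outcome `q`. Hence
the generated predictor puts total mass `∑ χ` on `p`, and its true expected outcome `κ(p)` is the
`χ`-weighted average of the `q`'s routed to `p`. By Jensen's inequality for the convex function
`|· - p| ^ t`, the calibration error at `p` is at most the cost of the tuples routed to `p`;
summing over `p` gives the budget `ε ^ t`.
-/

section Convexity

lemma convexOn_rpow_of_convexOn {E : Type*} [AddCommMonoid E] [SMul ℝ E] {s : Set E}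
    {f : E → ℝ} (hf : ConvexOn ℝ s f) (hf₀ : ∀ x ∈ s, 0 ≤ f x) {t : ℝ} (ht : 1 ≤ t) :
    ConvexOn ℝ s fun x => f x ^ t := by
  refine ⟨hf.1, fun x hx y hy a b ha hb hab => ?_⟩
  calc f (a • x + b • y) ^ t
      ≤ (a • f x + b • f y) ^ t :=
        Real.rpow_le_rpow (hf₀ _ (hf.1 hx hy ha hb hab)) (hf.2 hx hy ha hb hab) (by linarith)
    _ ≤ a • f x ^ t + b • f y ^ t :=
        (convexOn_rpow ht).2 (hf₀ x hx) (hf₀ y hy) ha hb hab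

lemma sum_smul_map_centerMass_le {𝕜 E β ι : Type*} [Field 𝕜] [LinearOrder 𝕜]
    [IsStrictOrderedRing 𝕜] [AddCommGroup E] [Module 𝕜 E] [AddCommGroup β] [PartialOrder β]
    [IsOrderedAddMonoid β] [Module 𝕜 β] [IsStrictOrderedModule 𝕜 β] {s : Set E} {f : E → β}
    (hf : ConvexOn 𝕜 s f) {I : Finset ι} {w : ι → 𝕜} {q : ι → E} (hw : ∀ i ∈ I, 0 ≤ w i)
    (hq : ∀ i ∈ I, q i ∈ s) :
    (∑ i ∈ I, w i) • f (I.centerMass w q) ≤ ∑ i ∈ I, w i • f (q i) := by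
  rcases (sum_nonneg hw).eq_or_lt with hzero | hpos
  · have hw₀ : ∀ i ∈ I, w i = 0 := (sum_eq_zero_iff_of_nonneg hw).1 hzero.symm
    rw [← hzero, zero_smul, sum_eq_zero fun i hi => by rw [hw₀ i hi, zero_smul]]
  · calc (∑ i ∈ I, w i) • f (I.centerMass w q)
        ≤ (∑ i ∈ I, w i) • I.centerMass w (f ∘ q) :=
          smul_le_smul_of_nonneg_left (hf.map_centerMass_le hw hpos hq) hpos.le
      _ = ∑ i ∈ I, w i • f (q i) := smul_inv_smul₀ hpos.ne' _

lemma sum_mul_dist_centerMass_rpow_le {E ι : Type*} [SeminormedAddCommGroup E]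
    [NormedSpace ℝ E] {I : Finset ι} {w : ι → ℝ} (hw : ∀ i ∈ I, 0 ≤ w i) (q : ι → E) (p : E)
    {t : ℝ} (ht : 1 ≤ t) :
    (∑ i ∈ I, w i) * dist (I.centerMass w q) p ^ t ≤ ∑ i ∈ I, w i * dist (q i) p ^ t :=
  sum_smul_map_centerMass_le
    (convexOn_rpow_of_convexOn (convexOn_dist p convex_univ) (fun _ _ => dist_nonneg) ht)
    hw fun _ _ => Set.mem_univ _

end Convexity

section Contribution

variable (S : Setup n) {i j : Fin n} {q : ℝ}

lemma ratio_self (i : Fin n) (q : ℝ) : ratio S i i q = 1 := if_neg (lt_irrefl _)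

lemma ratio_mem_Icc (hiq : S.theta i ≤ q) (hqj : q ≤ S.theta j) :
    ratio S i j q ∈ Set.Icc (0 : ℝ) 1 := by
  unfold ratio
  split_ifs with hij
  · exact ⟨div_nonneg (by linarith) (by linarith), div_le_one_of_le₀ (by linarith) (by linarith)⟩
  · exact ⟨zero_le_one, le_rfl⟩

lemma ratio_mul_theta_add (hiq : S.theta i ≤ q) (hqj : q ≤ S.theta j) :
    ratio S i j q * S.theta i + (1 - ratio S i j q) * S.theta j = q := by
  unfold ratio
  split_ifs with hij
  · have hne : S.theta j - S.theta i ≠ 0 := (sub_pos.2 hij).ne'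
    field_simp
    ring
  · linarith

lemma contrib_nonneg {x : BiTuple n} (hiq : S.theta x.1 ≤ x.2.2.1)
    (hqj : x.2.2.1 ≤ S.theta x.2.1) (i : Fin n) : 0 ≤ contrib S x i := by
  obtain ⟨hratio₀, hratio₁⟩ := ratio_mem_Icc S hiq hqj
  unfold contrib
  split_ifs <;> linarith

lemma sum_contrib_mul (x : BiTuple n) (w : Fin n → ℝ) :
    ∑ i, contrib S x i * w i =
      ratio S x.1 x.2.1 x.2.2.1 * w x.1 + (1 - ratio S x.1 x.2.1 x.2.2.1) * w x.2.1 := by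
  obtain ⟨i, j, q, p⟩ := x
  rcases eq_or_ne i j with rfl | hij
  · simp [contrib, ratio_self]
  · have hsecond : ∀ k, (j = k ∧ i ≠ k) ↔ j = k := fun k => and_iff_left_of_imp (· ▸ hij)
    simp [contrib, hsecond, add_mul, sum_add_distrib]

lemma sum_contrib (x : BiTuple n) : ∑ i, contrib S x i = 1 := by
  simpa using sum_contrib_mul S x 1

lemma sum_contrib_mul_theta {x : BiTuple n} (hiq : S.theta x.1 ≤ x.2.2.1)
    (hqj : x.2.2.1 ≤ S.theta x.2.1) : ∑ i, contrib S x i * S.theta i = x.2.2.1 := by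
  rw [sum_contrib_mul, ratio_mul_theta_add S hiq hqj]

end Contribution

section GeneratedPredictor

/-- The tuples `(i, j, q, p)` in the support of `χ` whose prediction `p` is the given one. -/
abbrev tuplesAt (χ : BiTuple n →₀ ℝ) (p : ℝ) : Finset (BiTuple n) :=
  χ.support.filter fun x => x.2.2.2 = p

/-- The predictions `p` used by a bi-event post-processing plan; it contains the support of the
generated predictor. -/
def predictions (χ : BiTuple n →₀ ℝ) : Finset ℝ := χ.support.image fun x => x.2.2.2

variable (S : Setup n) {χ : BiTuple n →₀ ℝ}

lemma mem_predictions_of_mem_support {x : BiTuple n} (hx : x ∈ χ.support) :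
    x.2.2.2 ∈ predictions χ :=
  mem_image_of_mem _ hx

lemma mem_predictions_of_genValBi_ne_zero {i : Fin n} {p : ℝ} (h : genValBi S χ i p ≠ 0) :
    p ∈ predictions χ := by
  obtain ⟨x, hx, -⟩ := exists_ne_zero_of_sum_ne_zero (right_ne_zero_of_mul h)
  obtain ⟨hxχ, rfl⟩ := mem_filter.1 hx
  exact mem_predictions_of_mem_support hxχ

variable (χ) in
/-- The predictor generated by a bi-event post-processing plan, with the values `genValBi`
packaged as finitely supported functions. -/
def generatedPredictor (i : Fin n) : ℝ →₀ ℝ :=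
  Finsupp.onFinset (predictions χ) (genValBi S χ i) fun _ =>
    mem_predictions_of_genValBi_ne_zero S

lemma support_generatedPredictor_subset (i : Fin n) :
    (generatedPredictor S χ i).support ⊆ predictions χ :=
  Finsupp.support_onFinset_subset

lemma suppF_generatedPredictor_subset : suppF (generatedPredictor S χ) ⊆ predictions χ :=
  biUnion_subset.2 fun i _ => support_generatedPredictor_subset S i

lemma lam_mul_generatedPredictor (i : Fin n) (p : ℝ) :
    S.lam i * generatedPredictor S χ i p = ∑ x ∈ tuplesAt χ p, χ x * contrib S x i := by
  change S.lam i * (1 / S.lam i * _) = _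
  rw [← mul_assoc, mul_one_div_cancel (S.lam_pos i).ne', one_mul]

lemma sum_generatedPredictor_mul (p : ℝ) (w : Fin n → ℝ) :
    ∑ i, S.lam i * generatedPredictor S χ i p * w i =
      ∑ x ∈ tuplesAt χ p, χ x * ∑ i, contrib S x i * w i := by
  simp only [lam_mul_generatedPredictor, sum_mul, mul_sum, mul_assoc]
  exact sum_comm

lemma marginal_generatedPredictor (p : ℝ) :
    marginal S (generatedPredictor S χ) p = ∑ x ∈ tuplesAt χ p, χ x := by
  simpa [marginal, sum_contrib] using sum_generatedPredictor_mul S (χ := χ) p 1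

lemma kappa_generatedPredictor (hχ : IsBiPlan S χ) (p : ℝ) :
    kappa S (generatedPredictor S χ) p = (tuplesAt χ p).centerMass χ fun x => x.2.2.1 := by
  have houtcome : ∑ i, S.lam i * generatedPredictor S χ i p * S.theta i =
      ∑ x ∈ tuplesAt χ p, χ x * x.2.2.1 := by
    rw [sum_generatedPredictor_mul]
    refine sum_congr rfl fun x hx => ?_
    obtain ⟨-, -, -, hiq, hqj⟩ := hχ.2 x (mem_filter.1 hx).1
    rw [sum_contrib_mul_theta S hiq hqj]
  rw [kappa, houtcome, marginal_generatedPredictor, div_eq_inv_mul]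
  rfl

lemma generatedPredictor_nonneg (hχ : IsBiPlan S χ) (i : Fin n) (p : ℝ) :
    0 ≤ generatedPredictor S χ i p := by
  refine nonneg_of_mul_nonneg_right ?_ (S.lam_pos i)
  rw [lam_mul_generatedPredictor]
  refine sum_nonneg fun x hx => ?_
  obtain ⟨-, -, -, hiq, hqj⟩ := hχ.2 x (mem_filter.1 hx).1
  exact mul_nonneg (hχ.1 x) (contrib_nonneg S hiq hqj i)

lemma lam_mul_sum_generatedPredictor (i : Fin n) :
    S.lam i * ∑ p ∈ (generatedPredictor S χ i).support, generatedPredictor S χ i p =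
      ∑ x ∈ χ.support, χ x * contrib S x i := by
  rw [sum_subset (support_generatedPredictor_subset S i)
    fun p _ hp => Finsupp.notMem_support_iff.1 hp, mul_sum]
  simp only [lam_mul_generatedPredictor]
  exact sum_fiberwise_of_maps_to (fun _ => mem_predictions_of_mem_support) _

lemma isPredictor_generatedPredictor (hχ : IsBiPlan S χ)
    (hlam : ∀ i, ∑ x ∈ χ.support, χ x * contrib S x i = S.lam i) :
    IsPredictor (generatedPredictor S χ) := by
  refine fun i => ⟨generatedPredictor_nonneg S hχ i, fun p hp => ?_, ?_⟩
  · obtain ⟨x, hx, rfl⟩ := mem_image.1 (support_generatedPredictor_subset S i hp)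
    exact (hχ.2 x hx).2.2.1
  · refine mul_left_cancel₀ (S.lam_pos i).ne' ?_
    rw [lam_mul_sum_generatedPredictor, hlam, mul_one]

end GeneratedPredictor

section CalibrationError

/-- The calibration error `f(p) * |κ(p) - p| ^ t` of the single prediction `p`; these terms sum
to the `t`-th power of `ECE S t f`. -/
def calibrationError (S : Setup n) (t : ℝ) (f : Fin n → ℝ →₀ ℝ) (p : ℝ) : ℝ :=
  marginal S f p * |kappa S f p - p| ^ t

variable (S : Setup n) {t : ℝ}

lemma calibrationError_nonneg {f : Fin n → ℝ →₀ ℝ} (hf : ∀ i p, 0 ≤ f i p) (t p : ℝ) :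
    0 ≤ calibrationError S t f p := by
  have hmarginal : 0 ≤ marginal S f p :=
    sum_nonneg fun i _ => mul_nonneg (S.lam_pos i).le (hf i p)
  exact mul_nonneg hmarginal (Real.rpow_nonneg (abs_nonneg _) t)

lemma ECE_le_iff {f : Fin n → ℝ →₀ ℝ} (hf : ∀ i p, 0 ≤ f i p) (ht : 0 < t) {ε : ℝ}
    (hε : 0 ≤ ε) : ECE S t f ≤ ε ↔ ∑ p ∈ suppF f, calibrationError S t f p ≤ ε ^ t := by
  rw [ECE, one_div]
  exact Real.rpow_inv_le_iff_of_pos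
    (sum_nonneg fun p _ => calibrationError_nonneg S hf t p) hε ht

variable {χ : BiTuple n →₀ ℝ}

lemma calibrationError_generatedPredictor_le (hχ : IsBiPlan S χ) (ht : 1 ≤ t) (p : ℝ) :
    calibrationError S t (generatedPredictor S χ) p ≤
      ∑ x ∈ tuplesAt χ p, χ x * |x.2.2.1 - x.2.2.2| ^ t := by
  rw [calibrationError, marginal_generatedPredictor, kappa_generatedPredictor S hχ]
  refine (sum_mul_dist_centerMass_rpow_le (fun x _ => hχ.1 x) _ p ht).trans_eq ?_
  exact sum_congr rfl fun x hx => by rw [(mem_filter.1 hx).2, Real.dist_eq]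

lemma sum_calibrationError_generatedPredictor_le (hχ : IsBiPlan S χ) (ht : 1 ≤ t) :
    ∑ p ∈ suppF (generatedPredictor S χ), calibrationError S t (generatedPredictor S χ) p ≤
      ∑ x ∈ χ.support, χ x * |x.2.2.1 - x.2.2.2| ^ t :=
  calc ∑ p ∈ suppF (generatedPredictor S χ), calibrationError S t (generatedPredictor S χ) p
      ≤ ∑ p ∈ predictions χ, calibrationError S t (generatedPredictor S χ) p :=
        sum_le_sum_of_subset_of_nonneg (suppF_generatedPredictor_subset S) fun p _ _ =>
          calibrationError_nonneg S (generatedPredictor_nonneg S hχ) t p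
    _ ≤ ∑ p ∈ predictions χ, ∑ x ∈ tuplesAt χ p, χ x * |x.2.2.1 - x.2.2.2| ^ t :=
        sum_le_sum fun p _ => calibrationError_generatedPredictor_le S hχ ht p
    _ = ∑ x ∈ χ.support, χ x * |x.2.2.1 - x.2.2.2| ^ t :=
        sum_fiberwise_of_maps_to (fun _ => mem_predictions_of_mem_support) _

end CalibrationError

/-- The predictor generated by a feasible bi-event post-processing
plan is a well-defined predictor and is `(ε, ℓ_t)`-calibrated. -/
theorem statement11 {n : ℕ} (S : Setup n) (t ε : ℝ) (ht : 1 ≤ t) (hε : 0 ≤ ε)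
    (χ : BiTuple n →₀ ℝ) (hχ : FeasibleBiPlan S t ε χ) :
    ∃ f : Fin n → ℝ →₀ ℝ,
      (∀ i p, f i p = genValBi S χ i p) ∧ IsPredictor f ∧ ECE S t f ≤ ε := by
  obtain ⟨hplan, hcost, hlam⟩ := hχ
  refine ⟨generatedPredictor S χ, fun _ _ => rfl,
    isPredictor_generatedPredictor S hplan hlam, ?_⟩
  rw [ECE_le_iff S (generatedPredictor_nonneg S hplan) (by linarith) hε]
  exact (sum_calibrationError_generatedPredictor_le S hplan ht).trans hcost

end PersuasiveCalibration
end
end
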